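/- arXiv:1704.06430 — 4 statements merged into one kernel-verified Lean document; each statement's English description precedes it below -/
import Mathlib

section
/- Let N ≥ 1 and 0 < Λ < 1, and let (u, v) be a classical solution of the system (P_Λ) (no sign or boundedness assumption on u, v). Then u(x)² + v(x)² ≤ 2/(Λ + 1) for every x ∈ ℝ^N. -/
/-!
Write `w = u² + v²` and `c = 2 / (Λ + 1)`. Multiplying the equations by `u` and `v` and using
`4 u² v² ≤ w²` gives `Δw ≥ 2 (u Δu + v Δv) ≥ (1 + Λ) w (w - c)`, a Keller–Osserman type
inequality with superlinear absorption, which bounds `w` without any growth assumption.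

Fix `x₀` and `R > 0`, put `h(x) = R² - |x - x₀|²`, and let `y` maximise `h² (w - c)` on the closed
ball of radius `R`, with maximum `M`. If `M > 0`, then `y` is interior and `w - M / h²` has a local
maximum at `y`, so the second derivative test along each coordinate direction (`directional_test`)
bounds `2 (u Δu + v Δv)` at `y` by `M Δ(h⁻²) ≤ M (4 N + 24) R² / h⁴`. Comparing with the
lower bound `(1 + Λ) (w - c)² = (1 + Λ) M² / h⁴` yields `(1 + Λ) M ≤ (4 N + 24) R²`. Since
`M ≥ R⁴ (w(x₀) - c)`, this reads `(1 + Λ) R² (w(x₀) - c) ≤ 4 N + 24` (`ball_estimate`), and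
letting `R → ∞` proves the claim.
-/

open scoped RealInnerProductSpace
open Filter

noncomputable section

/-- The Laplacian of `f : ℝ^N → ℝ`, as the sum of the pure second partial
derivatives in the coordinate directions. -/
def lap (N : ℕ) (f : EuclideanSpace ℝ (Fin N) → ℝ) (x : EuclideanSpace ℝ (Fin N)) : ℝ :=
  ∑ i : Fin N,
    fderiv ℝ (fun y => fderiv ℝ f y (EuclideanSpace.single i 1)) x (EuclideanSpace.single i 1)

/-- `(u, v)` is a classical solution of the system `(P_Λ)` on `ℝ^N`:
`u, v` are `C²` and `-Δu = u - u³ - Λ u v²`, `-Δv = v - v³ - Λ u² v` pointwise. -/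
def IsSolution (N : ℕ) (Λ : ℝ) (u v : EuclideanSpace ℝ (Fin N) → ℝ) : Prop :=
  ContDiff ℝ 2 u ∧ ContDiff ℝ 2 v ∧
  (∀ x, -lap N u x = u x - (u x) ^ 3 - Λ * u x * (v x) ^ 2) ∧
  (∀ x, -lap N v x = v x - (v x) ^ 3 - Λ * (u x) ^ 2 * v x)

/-- Condition `(h∞)`: `u → 1`, `v → 0` as `x_N → +∞` and `u → 0`, `v → 1` as
`x_N → -∞`, uniformly with respect to `x' ∈ ℝ^{N-1}` (the dimension is `N + 1`). -/
def Hinf (N : ℕ) (u v : EuclideanSpace ℝ (Fin (N + 1)) → ℝ) : Prop :=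
  (∀ ε : ℝ, 0 < ε → ∃ M : ℝ, ∀ x : EuclideanSpace ℝ (Fin (N + 1)),
    M ≤ x (Fin.last N) → |u x - 1| < ε ∧ |v x| < ε) ∧
  (∀ ε : ℝ, 0 < ε → ∃ M : ℝ, ∀ x : EuclideanSpace ℝ (Fin (N + 1)),
    x (Fin.last N) ≤ M → |u x| < ε ∧ |v x - 1| < ε)

/-- The necessary second-order condition at a local maximum, for a function whose derivative is
known explicitly near the point. -/
lemma second_deriv_nonpos {F F' : ℝ → ℝ} {D a : ℝ}
    (h1 : ∀ᶠ t in nhds a, HasDerivAt F (F' t) t) (h2 : HasDerivAt F' D a)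
    (hmax : IsLocalMax F a) : D ≤ 0 := by
  by_contra! hD
  have e1 : deriv F =ᶠ[nhds a] F' := h1.mono fun t ht => ht.deriv
  have e2 : deriv (deriv F) a = D := by rw [e1.deriv_eq, h2.deriv]
  -- Otherwise `a` is also a local minimum, so `F` is locally constant and `D = 0`.
  have hmin : IsLocalMin F a := isLocalMin_of_deriv_deriv_pos (by rw [e2]; exact hD)
    hmax.deriv_eq_zero h1.self_of_nhds.continuousAt
  have hconst : F =ᶠ[nhds a] fun _ => F a := by
    filter_upwards [hmax, hmin] with t ht ht'
    exact le_antisymm ht ht'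
  have e3 : deriv F =ᶠ[nhds a] fun _ => 0 := by
    have := hconst.deriv
    simpa using this
  have := e3.deriv_eq
  simp [e2] at this
  linarith

/-- First derivative everywhere, and second derivative at `0`, of a `C²` function along a line. -/
lemma line_deriv {E : Type*} [NormedAddCommGroup E] [NormedSpace ℝ E] {f : E → ℝ}
    (hf : ContDiff ℝ 2 f) (y e : E) :
    (∀ t : ℝ, HasDerivAt (fun s : ℝ => f (y + s • e)) (fderiv ℝ f (y + t • e) e) t) ∧
    HasDerivAt (fun s : ℝ => fderiv ℝ f (y + s • e) e)
      (fderiv ℝ (fun z => fderiv ℝ f z e) y e) 0 := by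
  have hl : ∀ t : ℝ, HasDerivAt (fun s : ℝ => y + s • e) e t := fun t => by
    simpa using ((hasDerivAt_id t).smul_const e).const_add y
  refine ⟨fun t => ?_, ?_⟩
  · exact ((hf.differentiable (by norm_num)) _).hasFDerivAt.comp_hasDerivAt t (hl t)
  · have hd : Differentiable ℝ (fun z => fderiv ℝ f z e) :=
      ((hf.fderiv_right (m := 1) (by norm_num)).clm_apply contDiff_const).differentiable
        (by norm_num)
    have h0 : HasFDerivAt (fun z => fderiv ℝ f z e)
        (fderiv ℝ (fun z => fderiv ℝ f z e) y) (y + (0 : ℝ) • e) := by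
      simpa using (hd y).hasFDerivAt
    exact h0.comp_hasDerivAt (0 : ℝ) (hl 0)

/-- Second derivative test in one direction for `w - M / h²`: here `U`, `V` are the restrictions
of `u`, `v` to a coordinate line through the maximum point, and `h - 2 a t - t²` that of the
function `R² - |x - x₀|²`. -/
lemma directional_test {U V U' V' : ℝ → ℝ} {A B M h a c : ℝ} (hh : 0 < h)
    (hU : ∀ t, HasDerivAt U (U' t) t) (hV : ∀ t, HasDerivAt V (V' t) t)
    (hU' : HasDerivAt U' A 0) (hV' : HasDerivAt V' B 0)
    (hle : ∀ t, 0 < h - 2 * a * t - t ^ 2 →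
      (h - 2 * a * t - t ^ 2) ^ 2 * (U t ^ 2 + V t ^ 2 - c) ≤ M)
    (heq : h ^ 2 * (U 0 ^ 2 + V 0 ^ 2 - c) = M) :
    2 * U 0 * A + 2 * V 0 * B ≤ 4 * M / h ^ 3 + 24 * M * a ^ 2 / h ^ 4 := by
  let p : ℝ → ℝ := fun t => h - 2 * a * t - t ^ 2
  let p' : ℝ → ℝ := fun t => -2 * a - 2 * t
  have hp0 : p 0 = h := by simp [p]
  have hp : ∀ t, HasDerivAt p (p' t) t := fun t => by
    have := (((hasDerivAt_id t).const_mul (2 * a)).const_sub h).sub ((hasDerivAt_id t).pow 2)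
    refine this.congr_deriv ?_
    simp [p']
  have hp' : HasDerivAt p' (-2) 0 := by
    have := ((hasDerivAt_id (0 : ℝ)).const_mul 2).const_sub (-2 * a)
    exact this.congr_deriv (by simp)
  have hpos : ∀ᶠ t in nhds (0 : ℝ), 0 < p t :=
    (hp 0).continuousAt.eventually (lt_mem_nhds (by rw [hp0]; exact hh))
  let F : ℝ → ℝ := fun t => U t ^ 2 + V t ^ 2 - M / p t ^ 2
  let F' : ℝ → ℝ := fun t => 2 * U t * U' t + 2 * V t * V' t + 2 * M * p' t / p t ^ 3
  have h1 : ∀ᶠ t in nhds (0 : ℝ), HasDerivAt F (F' t) t := by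
    filter_upwards [hpos] with t ht
    have := (((hU t).pow 2).add ((hV t).pow 2)).sub
      ((hasDerivAt_const t M).div ((hp t).pow 2) (pow_ne_zero 2 ht.ne'))
    refine this.congr_deriv ?_
    simp [F']
    field_simp
    ring
  have h2 : HasDerivAt F' (2 * U' 0 ^ 2 + 2 * U 0 * A + (2 * V' 0 ^ 2 + 2 * V 0 * B)
      - (4 * M / h ^ 3 + 24 * M * a ^ 2 / h ^ 4)) 0 := by
    have hne : p 0 ^ 3 ≠ 0 := by rw [hp0]; positivity
    have := ((((hU 0).const_mul 2).mul hU').add (((hV 0).const_mul 2).mul hV')).add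
      ((hp'.const_mul (2 * M)).div ((hp 0).pow 3) hne)
    refine this.congr_deriv ?_
    simp [hp0, p']
    field_simp
    ring
  have hmax : IsLocalMax F 0 := by
    filter_upwards [hpos] with t ht
    have h3 : U t ^ 2 + V t ^ 2 - c ≤ M / p t ^ 2 := by
      rw [le_div_iff₀ (by positivity), mul_comm]
      exact hle t ht
    have h4 : U 0 ^ 2 + V 0 ^ 2 - c = M / p 0 ^ 2 := by
      rw [eq_div_iff (by rw [hp0]; positivity), hp0, mul_comm]
      exact heq
    simp only [F]
    linarith
  have := second_deriv_nonpos h1 h2 hmax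
  nlinarith [sq_nonneg (U' 0), sq_nonneg (V' 0)]

/-- The Keller–Osserman estimate on the ball of radius `R` around `x₀`: the excess of `u² + v²`
over `2 / (Λ + 1)` at the centre is `O(R⁻²)`, with a constant independent of the solution. -/
lemma ball_estimate (N : ℕ) (Λ : ℝ) (hΛ₀ : 0 < Λ) (hΛ₁ : Λ < 1)
    (u v : EuclideanSpace ℝ (Fin N) → ℝ) (hsol : IsSolution N Λ u v)
    (x₀ : EuclideanSpace ℝ (Fin N)) {R : ℝ} (hR : 0 < R) :
    (1 + Λ) * R ^ 2 * (u x₀ ^ 2 + v x₀ ^ 2 - 2 / (Λ + 1)) ≤ 4 * N + 24 := by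
  obtain ⟨hu, hv, equ, eqv⟩ := hsol
  set c := 2 / (Λ + 1) with hc
  have hcpos : 0 < c := by positivity
  have hcΛ : (1 + Λ) * c = 2 := by rw [hc]; field_simp; ring
  by_cases hx : u x₀ ^ 2 + v x₀ ^ 2 - c ≤ 0
  · have : (1 + Λ) * R ^ 2 * (u x₀ ^ 2 + v x₀ ^ 2 - c) ≤ 0 :=
      mul_nonpos_of_nonneg_of_nonpos (by positivity) hx
    have : (0 : ℝ) ≤ N := Nat.cast_nonneg N
    linarith
  push Not at hx
  let g : EuclideanSpace ℝ (Fin N) → ℝ := fun z =>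
    (R ^ 2 - ‖z - x₀‖ ^ 2) ^ 2 * (u z ^ 2 + v z ^ 2 - c)
  have hg : Continuous g := by
    have := hu.continuous
    have := hv.continuous
    fun_prop
  obtain ⟨y, hyB, hy⟩ := (isCompact_closedBall x₀ R).exists_isMaxOn
    ⟨x₀, Metric.mem_closedBall_self hR.le⟩ hg.continuousOn
  have hyR : ‖y - x₀‖ ≤ R := by simpa [dist_eq_norm] using hyB
  have hMge : R ^ 4 * (u x₀ ^ 2 + v x₀ ^ 2 - c) ≤ g y := by
    have := hy (Metric.mem_closedBall_self (x := x₀) hR.le)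
    simp only [Set.mem_ofPred_eq, g, sub_self, norm_zero] at this
    simp only [g]
    linarith
  have hMpos : 0 < g y := lt_of_lt_of_le (by positivity) hMge
  set r := ‖y - x₀‖ with hr
  set M := g y with hM
  set h := R ^ 2 - r ^ 2 with hh
  have hr0 : 0 ≤ r := norm_nonneg _
  have hMdef : M = h ^ 2 * (u y ^ 2 + v y ^ 2 - c) := rfl
  have hh0 : 0 ≤ h := by rw [hh]; nlinarith
  have hhpos : 0 < h := by
    rcases hh0.eq_or_lt with h0 | h0
    · rw [hMdef, ← h0] at hMpos
      simp at hMpos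
    · exact h0
  have hwc : 0 < u y ^ 2 + v y ^ 2 - c := by
    rw [hMdef] at hMpos
    exact (pos_iff_pos_of_mul_pos hMpos).1 (by positivity)
  have hdir : ∀ i : Fin N,
      2 * u y * fderiv ℝ (fun z => fderiv ℝ u z (EuclideanSpace.single i 1)) y
          (EuclideanSpace.single i 1)
        + 2 * v y * fderiv ℝ (fun z => fderiv ℝ v z (EuclideanSpace.single i 1)) y
          (EuclideanSpace.single i 1)
        ≤ 4 * M / h ^ 3 + 24 * M * ((y - x₀) i) ^ 2 / h ^ 4 := by
    intro i
    obtain ⟨hu1, hu2⟩ := line_deriv hu y (EuclideanSpace.single i (1 : ℝ))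
    obtain ⟨hv1, hv2⟩ := line_deriv hv y (EuclideanSpace.single i (1 : ℝ))
    have key : ∀ t : ℝ, R ^ 2 - ‖y + t • EuclideanSpace.single i (1 : ℝ) - x₀‖ ^ 2
        = h - 2 * (y - x₀) i * t - t ^ 2 := by
      intro t
      have : y + t • EuclideanSpace.single i (1 : ℝ) - x₀
          = (y - x₀) + t • EuclideanSpace.single i (1 : ℝ) := by abel
      rw [this, norm_add_sq_real, inner_smul_right, norm_smul, EuclideanSpace.inner_single_right]
      simp [hh, hr]
      ring
    have := directional_test (c := c) (M := M) (a := (y - x₀) i) hhpos hu1 hv1 hu2 hv2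
      (fun t ht => by
        rw [← key] at ht ⊢
        refine hy (Metric.mem_closedBall.2 ?_)
        rw [dist_eq_norm]
        exact le_of_sq_le_sq (by linarith) hR.le)
      (by simp [hMdef])
    simpa using this
  have hsum := Finset.sum_le_sum fun i (_ : i ∈ Finset.univ) => hdir i
  have hlhs : ∑ i : Fin N,
      (2 * u y * fderiv ℝ (fun z => fderiv ℝ u z (EuclideanSpace.single i 1)) y
          (EuclideanSpace.single i 1)
        + 2 * v y * fderiv ℝ (fun z => fderiv ℝ v z (EuclideanSpace.single i 1)) y
          (EuclideanSpace.single i 1)) = 2 * u y * lap N u y + 2 * v y * lap N v y := by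
    simp only [lap, Finset.sum_add_distrib, Finset.mul_sum]
  have hrhs : ∑ i : Fin N, (4 * M / h ^ 3 + 24 * M * ((y - x₀) i) ^ 2 / h ^ 4)
      = N * (4 * M / h ^ 3) + 24 * M * r ^ 2 / h ^ 4 := by
    rw [Finset.sum_add_distrib, Finset.sum_const, Finset.card_univ, Fintype.card_fin,
      nsmul_eq_mul, ← Finset.sum_div, ← Finset.mul_sum, hr, EuclideanSpace.real_norm_sq_eq]
  rw [hlhs, hrhs] at hsum
  -- The reaction terms dominate `(1 + Λ) (w - c)²`, because `w ≥ w - c ≥ 0`.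
  have hlow : (1 + Λ) * (u y ^ 2 + v y ^ 2 - c) ^ 2
      ≤ 2 * u y * lap N u y + 2 * v y * lap N v y := by
    have e1 : lap N u y = -(u y - (u y) ^ 3 - Λ * u y * (v y) ^ 2) := by
      rw [← equ y]; ring
    have e2 : lap N v y = -(v y - (v y) ^ 3 - Λ * (u y) ^ 2 * v y) := by
      rw [← eqv y]; ring
    rw [e1, e2]
    have k1 : 0 ≤ (1 - Λ) * (u y ^ 2 - v y ^ 2) ^ 2 :=
      mul_nonneg (by linarith) (sq_nonneg _)
    have k2 : 0 ≤ (1 + Λ) * c * (u y ^ 2 + v y ^ 2 - c) := by positivity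
    have k3 : (1 + Λ) * c * (u y ^ 2 + v y ^ 2) = 2 * (u y ^ 2 + v y ^ 2) := by rw [hcΛ]
    nlinarith [k1, k2, k3]
  have hfin : (1 + Λ) * M ≤ (4 * N + 24) * R ^ 2 := by
    have h1 : (1 + Λ) * (u y ^ 2 + v y ^ 2 - c) ^ 2 * h ^ 4
        ≤ (N * (4 * M / h ^ 3) + 24 * M * r ^ 2 / h ^ 4) * h ^ 4 :=
      mul_le_mul_of_nonneg_right (hlow.trans hsum) (by positivity)
    have h2 : (1 + Λ) * (u y ^ 2 + v y ^ 2 - c) ^ 2 * h ^ 4 = (1 + Λ) * M * M := by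
      rw [hMdef]; ring
    have h3 : (N * (4 * M / h ^ 3) + 24 * M * r ^ 2 / h ^ 4) * h ^ 4
        = (4 * N * h + 24 * r ^ 2) * M := by
      field_simp
    rw [h2, h3] at h1
    have h4 := le_of_mul_le_mul_right h1 hMpos
    have h5 : (N : ℝ) * h ≤ N * R ^ 2 :=
      mul_le_mul_of_nonneg_left (by linarith [sq_nonneg r, hh]) (Nat.cast_nonneg N)
    have h6 : r ^ 2 ≤ R ^ 2 := by linarith [hh]
    linarith
  have h6 : (1 + Λ) * (R ^ 4 * (u x₀ ^ 2 + v x₀ ^ 2 - c)) ≤ (1 + Λ) * M :=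
    mul_le_mul_of_nonneg_left hMge (by linarith)
  have h7 : ((1 + Λ) * R ^ 2 * (u x₀ ^ 2 + v x₀ ^ 2 - c)) * R ^ 2 ≤ (4 * N + 24) * R ^ 2 := by
    linarith
  exact le_of_mul_le_mul_right h7 (by positivity)

/-- Theorem 1.3 (iii): universal bound `u² + v² ≤ 2/(Λ+1)` for `0 < Λ < 1`. -/
theorem stmt_4 (N : ℕ) (Λ : ℝ) (hΛ₀ : 0 < Λ) (hΛ₁ : Λ < 1)
    (u v : EuclideanSpace ℝ (Fin (N + 1)) → ℝ)
    (hsol : IsSolution (N + 1) Λ u v) :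
    ∀ x, (u x) ^ 2 + (v x) ^ 2 ≤ 2 / (Λ + 1) := by
  intro x
  by_contra! hx
  set d := u x ^ 2 + v x ^ 2 - 2 / (Λ + 1) with hd
  have hdpos : 0 < d := by linarith
  obtain ⟨R, hR1, hRbig⟩ : ∃ R : ℝ, 1 ≤ R ∧ (4 * ((N + 1 : ℕ) : ℝ) + 24) / d < R := by
    refine ⟨max 1 ((4 * ((N + 1 : ℕ) : ℝ) + 24) / d + 1), le_max_left _ _, ?_⟩
    exact lt_of_lt_of_le (lt_add_one _) (le_max_right _ _)
  have h1 := ball_estimate (N + 1) Λ hΛ₀ hΛ₁ u v hsol x (R := R) (by linarith)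
  rw [← hd] at h1
  rw [div_lt_iff₀ hdpos] at hRbig
  have h2 : R * d ≤ (1 + Λ) * R ^ 2 * d :=
    mul_le_mul_of_nonneg_right (by nlinarith) hdpos.le
  linarith
end
end

section
/- Let N ≥ 1 and Λ > 1. Let (u, v) be a classical solution of the system (P_Λ) with u ≥ 0 and v ≥ 0 on ℝ^N, and assume that u(x', x_N) − v(x', x_N) → 1 as x_N → +∞ and u(x', x_N) − v(x', x_N) → −1 as x_N → −∞, uniformly with respect to x' ∈ ℝ^{N−1}. Then (u, v) satisfies condition (h∞), u and v depend only on x_N, and ∂_N u > 0 and ∂_N v < 0 at every point of ℝ^N. -/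
/-!
The proof is the sliding method, carried out with maximum principles on unbounded sets in place of
compactness and elliptic regularity. The basic tool is `exists_almost_max`: a function bounded above
has almost maximal points at which its Laplacian is almost nonpositive, as one sees by subtracting
`δ ‖x‖²`.

A Keller–Osserman argument (`le_one_of_lap`) gives `u, v ≤ 1`. Since also `u, v ≥ 0`, the limits of
`u - v` force the limits of `u` and of `v`, which is `(h∞)`.

Fix a translation `τ = h + t e_N` with `h` horizontal and `t > 0`. The functions `u - u(· + τ)` and
`v(· + τ) - v` solve a cooperative system. As `Λ > 1`, both `(1, 0)` and `(0, 1)` are linearly stable,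
so these functions have no positive supremum in the region where `(u, v)` is close to `(0, 1)` or the
translate is close to `(1, 0)`; hence the order `u ≤ u(· + τ)`, `v(· + τ) ≤ v` only has to be checked
on a bounded slab (`order_of_slab`), which is empty for large `t`. Let `T` be the supremum of
the `t > 0` for which the order fails. At `t = T` the increments are nonnegative supersolutions of
`Δw = K w`, and they are bounded below by a positive constant on the slab (`increment_gap`): comparison
with a Gaussian (`propagate_small`) shows that a very small value makes the increments small on a large
ball, hence along a chain `x + iτ` that joins the two ends, against the limits at `± ∞`. Since `u` and
`v` are Lipschitz (`exists_lipschitz`, by reflection and a barrier on a slab), the order persists for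
`t` slightly below `T`, a contradiction. So the order holds for all `t > 0` (`slide`).

Letting `t → 0⁺` with `h` and `-h` shows that `u, v` depend only on `x_N`. The derivatives of the
profiles of `u` and `-v` are nonnegative and satisfy `p'' ≤ k² p`, so a zero would make `p`
vanish identically (`ode_zero`), which is impossible as the profiles are not constant.
-/

open scoped RealInnerProductSpace
open Filter

noncomputable section

open scoped Topology

/-! ### Second derivatives along coordinate lines -/

/-- `g` is differentiable near `0` and its derivative is differentiable at `0` with derivative `a`. -/
def HasD2 (g : ℝ → ℝ) (a : ℝ) : Prop :=
  ∃ g' : ℝ → ℝ, (∀ᶠ s in 𝓝 (0 : ℝ), HasDerivAt g (g' s) s) ∧ HasDerivAt g' a 0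

lemma HasD2.sub {f g : ℝ → ℝ} {a b : ℝ} (hf : HasD2 f a) (hg : HasD2 g b) :
    HasD2 (fun s => f s - g s) (a - b) := by
  obtain ⟨f', hf1, hf2⟩ := hf
  obtain ⟨g', hg1, hg2⟩ := hg
  refine ⟨fun s => f' s - g' s, ?_, hf2.sub hg2⟩
  filter_upwards [hf1, hg1] with s h1 h2 using h1.sub h2

lemma HasD2.comp_neg {f : ℝ → ℝ} {a : ℝ} (hf : HasD2 f a) :
    HasD2 (fun s => f (-s)) a := by
  obtain ⟨f', hf1, hf2⟩ := hf
  have ht : Tendsto (fun s : ℝ => -s) (𝓝 0) (𝓝 0) := by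
    simpa using (continuous_neg (G := ℝ)).tendsto 0
  refine ⟨fun s => -f' (-s), ?_, ?_⟩
  · filter_upwards [ht.eventually hf1] with s h1
    have := HasDerivAt.comp s h1 (hasDerivAt_neg s)
    simpa [Function.comp_def] using this
  · have h0 : HasDerivAt f' a (-0 : ℝ) := by simpa using hf2
    have := (HasDerivAt.comp (0 : ℝ) h0 (hasDerivAt_neg (0 : ℝ))).fun_neg
    simpa [Function.comp_def] using this

lemma HasD2.deriv_deriv {f : ℝ → ℝ} {a : ℝ} (hf : HasD2 f a) : deriv (deriv f) 0 = a := by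
  obtain ⟨f', hf1, hf2⟩ := hf
  have : deriv f =ᶠ[𝓝 0] f' := hf1.mono fun s h => h.deriv
  rw [this.deriv_eq, hf2.deriv]

lemma HasD2.nonpos_of_isLocalMax {f : ℝ → ℝ} {a : ℝ} (hf : HasD2 f a)
    (hm : IsLocalMax f 0) : a ≤ 0 := by
  by_contra! ha
  have hd := hf.deriv_deriv
  have hc : ContinuousAt f 0 := by
    obtain ⟨f', hf1, -⟩ := hf
    exact hf1.self_of_nhds.continuousAt
  have hmin : IsLocalMin f 0 :=
    isLocalMin_of_deriv_deriv_pos (by rw [hd]; exact ha) hm.deriv_eq_zero hc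
  have hconst : f =ᶠ[𝓝 0] fun _ => f 0 := by
    filter_upwards [hm, hmin] with s h1 h2 using le_antisymm h1 h2
  have h1 : deriv f =ᶠ[𝓝 0] fun _ => 0 := by
    simpa using hconst.deriv
  have h2 := h1.deriv_eq
  rw [hd] at h2
  simp at h2
  linarith

lemma hasD2_quad (a b c : ℝ) : HasD2 (fun s => a + b * s + c * s ^ 2) (2 * c) := by
  refine ⟨fun s => b + 2 * c * s, Eventually.of_forall fun s => ?_, ?_⟩
  · have := (((hasDerivAt_id s).const_mul b).const_add a).add
      (((hasDerivAt_id s).pow 2).const_mul c)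
    refine this.congr_deriv ?_
    simp; ring
  · simpa using ((hasDerivAt_id (0 : ℝ)).const_mul (2 * c)).const_add b

/-- The pure second partial derivatives of `f` at `x` exist and add up to `L`. Phrased through
one-variable slices, this is stable under subtraction, translations and coordinate reflections
without any smoothness bookkeeping. -/
def HasLap {n : ℕ} (f : EuclideanSpace ℝ (Fin n) → ℝ) (x : EuclideanSpace ℝ (Fin n)) (L : ℝ) :
    Prop :=
  ∃ a : Fin n → ℝ,
    (∀ i, HasD2 (fun s => f (x + s • EuclideanSpace.single i 1)) (a i)) ∧ ∑ i, a i = L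

variable {n : ℕ}

lemma hasDerivAt_slice {f : EuclideanSpace ℝ (Fin n) → ℝ} (hf : Differentiable ℝ f)
    (x e : EuclideanSpace ℝ (Fin n)) (s : ℝ) :
    HasDerivAt (fun s : ℝ => f (x + s • e)) (fderiv ℝ f (x + s • e) e) s := by
  have h1 : HasDerivAt (fun s : ℝ => x + s • e) e s := by
    simpa using ((hasDerivAt_id s).smul_const e).const_add x
  exact (hf (x + s • e)).hasFDerivAt.comp_hasDerivAt s h1

lemma ContDiff.hasLap {f : EuclideanSpace ℝ (Fin n) → ℝ} (hf : ContDiff ℝ 2 f)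
    (x : EuclideanSpace ℝ (Fin n)) : HasLap f x (lap n f x) := by
  refine ⟨_, fun i => ?_, rfl⟩
  have hd : Differentiable ℝ f := hf.differentiable (by norm_num)
  have hd' : Differentiable ℝ
      (fun y => fderiv ℝ f y (EuclideanSpace.single i (1 : ℝ))) := by
    have : ContDiff ℝ 1 (fderiv ℝ f) := hf.fderiv_right (by norm_num)
    exact (this.differentiable (by norm_num)).clm_apply (differentiable_const _)
  refine ⟨fun s => fderiv ℝ f (x + s • EuclideanSpace.single i (1 : ℝ))
    (EuclideanSpace.single i 1), Eventually.of_forall fun s => hasDerivAt_slice hd x _ s, ?_⟩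
  simpa using hasDerivAt_slice hd' x (EuclideanSpace.single i (1 : ℝ)) 0

lemma HasLap.sub {f g : EuclideanSpace ℝ (Fin n) → ℝ} {x : EuclideanSpace ℝ (Fin n)} {a b : ℝ}
    (hf : HasLap f x a) (hg : HasLap g x b) : HasLap (fun x => f x - g x) x (a - b) := by
  obtain ⟨f', hf1, rfl⟩ := hf
  obtain ⟨g', hg1, rfl⟩ := hg
  exact ⟨fun i => f' i - g' i, fun i => (hf1 i).sub (hg1 i), by simp⟩

lemma HasLap.translate {f : EuclideanSpace ℝ (Fin n) → ℝ} {x τ : EuclideanSpace ℝ (Fin n)} {a : ℝ}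
    (hf : HasLap f (x + τ) a) : HasLap (fun x => f (x + τ)) x a := by
  obtain ⟨f', hf1, rfl⟩ := hf
  refine ⟨f', fun i => ?_, rfl⟩
  simpa only [add_right_comm] using hf1 i

/-- Comparison at a touching point: if `f` is touched from above at `x` along each coordinate
line by a function with second derivative `c i`, then the Laplacian of `f` at `x` is at most
`∑ i, c i`. -/
lemma HasLap.le_of_touch {f : EuclideanSpace ℝ (Fin n) → ℝ} {x : EuclideanSpace ℝ (Fin n)} {L : ℝ}
    (hf : HasLap f x L) (φ : Fin n → ℝ → ℝ) (c : Fin n → ℝ) (hφ : ∀ i, HasD2 (φ i) (c i))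
    (h0 : ∀ i, φ i 0 = f x)
    (hle : ∀ i, ∀ᶠ s in 𝓝 (0 : ℝ), f (x + s • EuclideanSpace.single i 1) ≤ φ i s) :
    L ≤ ∑ i, c i := by
  obtain ⟨f', hf1, rfl⟩ := hf
  refine Finset.sum_le_sum fun i _ => ?_
  have h := ((hf1 i).sub (hφ i)).nonpos_of_isLocalMax (by
    filter_upwards [hle i] with s hs
    simp [h0]
    linarith)
  linarith

lemma norm_sq_slice (x : EuclideanSpace ℝ (Fin n)) (i : Fin n) (s : ℝ) :
    ‖x + s • EuclideanSpace.single i (1 : ℝ)‖ ^ 2 = ‖x‖ ^ 2 + 2 * x i * s + s ^ 2 := by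
  rw [norm_add_sq_real, norm_smul, inner_smul_right, EuclideanSpace.inner_single_right]
  simp
  ring

/-! ### Maximum principles -/

/-- Approximate maximum principle on a closed, possibly unbounded, set: a continuous function `f`
bounded above on `S` has almost maximal points at which `f - η ‖·‖²` is maximal over `S`. -/
lemma exists_penalized_max {S : Set (EuclideanSpace ℝ (Fin n))} (hS : IsClosed S)
    {f : EuclideanSpace ℝ (Fin n) → ℝ} (hf : Continuous f) {B : ℝ} (hB : ∀ x ∈ S, f x ≤ B)
    {y : EuclideanSpace ℝ (Fin n)} (hy : y ∈ S) {η : ℝ} (hη : 0 < η) :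
    ∃ x ∈ S, f y - η ≤ f x ∧ ∃ δ, 0 < δ ∧ δ ≤ η ∧
      ∀ z ∈ S, f z ≤ f x + δ * (‖z‖ ^ 2 - ‖x‖ ^ 2) := by
  obtain ⟨δ, hδ, hδη, hδy⟩ : ∃ δ, 0 < δ ∧ δ ≤ η ∧ δ * ‖y‖ ^ 2 ≤ η := by
    refine ⟨η / (1 + ‖y‖ ^ 2), by positivity, div_le_self hη.le (by nlinarith [sq_nonneg ‖y‖]), ?_⟩
    rw [div_mul_eq_mul_div, div_le_iff₀ (by positivity)]
    nlinarith
  -- Outside the ball of this radius the penalized function lies below its value at `y`.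
  set R : ℝ := ‖y‖ + (B - f y) / δ + 1 with hR
  have hBy : 0 ≤ B - f y := by linarith [hB y hy]
  have hR1 : 1 ≤ R := by
    have : 0 ≤ (B - f y) / δ := by positivity
    have := norm_nonneg y
    linarith
  have hyR : ‖y‖ ≤ R := by
    have : 0 ≤ (B - f y) / δ := by positivity
    linarith
  have hcomp : IsCompact (S ∩ Metric.closedBall 0 R) :=
    (isCompact_closedBall 0 R).inter_left hS
  obtain ⟨x, ⟨hxS, hxR⟩, hx⟩ := hcomp.exists_isMaxOn (f := fun x => f x - δ * ‖x‖ ^ 2)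
    ⟨y, hy, by simpa using hyR⟩ (by fun_prop)
  have hyx : f y - δ * ‖y‖ ^ 2 ≤ f x - δ * ‖x‖ ^ 2 := hx ⟨hy, by simpa using hyR⟩
  refine ⟨x, hxS, ?_, δ, hδ, hδη, fun z hz => ?_⟩
  · have : 0 ≤ δ * ‖x‖ ^ 2 := by positivity
    linarith
  · by_cases hzR : ‖z‖ ≤ R
    · have : f z - δ * ‖z‖ ^ 2 ≤ f x - δ * ‖x‖ ^ 2 := hx ⟨hz, by simpa using hzR⟩
      linarith
    · push Not at hzR
      have h1 : R ^ 2 ≤ ‖z‖ ^ 2 := by gcongr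
      have h2 : ‖y‖ ^ 2 + (B - f y) / δ ≤ R ^ 2 := by
        have : 0 ≤ (B - f y) / δ := by positivity
        have := norm_nonneg y
        rw [hR]
        nlinarith
      have h3 : δ * ((B - f y) / δ) = B - f y := by field_simp
      have h4 : δ * (‖y‖ ^ 2 + (B - f y) / δ) ≤ δ * ‖z‖ ^ 2 := by
        gcongr
        linarith
      have := hB z hz
      linarith

/-- At a point where `f - δ ‖·‖²` has a maximum over a neighbourhood, the Laplacian of `f` is at
most that of `δ ‖·‖²`. -/
lemma HasLap.le_of_penalized {f : EuclideanSpace ℝ (Fin n) → ℝ} {x : EuclideanSpace ℝ (Fin n)}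
    {L δ : ℝ} (hf : HasLap f x L) {S : Set (EuclideanSpace ℝ (Fin n))} (hS : S ∈ 𝓝 x)
    (hx : ∀ z ∈ S, f z ≤ f x + δ * (‖z‖ ^ 2 - ‖x‖ ^ 2)) : L ≤ 2 * n * δ := by
  have h := hf.le_of_touch (fun i s => f x + (δ * (2 * x i)) * s + δ * s ^ 2) (fun _ => 2 * δ)
    (fun i => hasD2_quad _ _ _) (fun i => by simp) (fun i => by
      have ht : Tendsto (fun s : ℝ => x + s • EuclideanSpace.single i (1 : ℝ)) (𝓝 0) (𝓝 x) := by
        have : Continuous (fun s : ℝ => x + s • EuclideanSpace.single i (1 : ℝ)) := by fun_prop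
        simpa using this.tendsto 0
      filter_upwards [ht hS] with s hs
      have := hx _ hs
      rw [norm_sq_slice] at this
      linarith)
  simp at h
  linarith

/-- Omori–Yau type principle: a function bounded above has almost maximal points at which its
Laplacian is almost nonpositive. -/
lemma exists_almost_max {f : EuclideanSpace ℝ (Fin n) → ℝ} (hf : Continuous f) {B : ℝ}
    (hB : ∀ x, f x ≤ B) {L : EuclideanSpace ℝ (Fin n) → ℝ} (hL : ∀ x, HasLap f x (L x))
    (y : EuclideanSpace ℝ (Fin n)) {η : ℝ} (hη : 0 < η) :
    ∃ x, f y - η ≤ f x ∧ L x ≤ 2 * n * η := by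
  obtain ⟨x, -, h1, δ, hδ, hδη, h2⟩ :=
    exists_penalized_max isClosed_univ hf (fun x _ => hB x) (Set.mem_univ y) hη
  refine ⟨x, h1, ((hL x).le_of_penalized univ_mem h2).trans ?_⟩
  gcongr

/-- Keller–Osserman bound: an entire nonnegative solution of `Δf ≥ f³ - f` is at most `1`.
On a ball of radius `R` about `x₀`, let `m` be the maximum of `f (R² - |x - x₀|²)`; then `f` is
touched from above by `m / (R² - |x - x₀|²)`, whence `m² ≤ R⁴ + O(R²)`, and `R → ∞`. -/
lemma le_one_of_lap {f : EuclideanSpace ℝ (Fin n) → ℝ} (hf : Continuous f) (h0 : ∀ x, 0 ≤ f x)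
    {L : EuclideanSpace ℝ (Fin n) → ℝ} (hL : ∀ x, HasLap f x (L x))
    (hle : ∀ x, f x ^ 3 - f x ≤ L x) (x₀ : EuclideanSpace ℝ (Fin n)) : f x₀ ≤ 1 := by
  have key : ∀ R : ℝ, 0 < R → (f x₀) ^ 2 * R ^ 2 ≤ R ^ 2 + (2 * n + 8) := by
    intro R hR
    rcases (h0 x₀).eq_or_lt with hz | hpos
    · have : (0 : ℝ) ≤ R ^ 2 + (2 * n + 8) := by positivity
      simpa [← hz] using this
    obtain ⟨y, hyR, hy⟩ := (isCompact_closedBall x₀ R).exists_isMaxOn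
      (f := fun x => f x * (R ^ 2 - ‖x - x₀‖ ^ 2)) ⟨x₀, by simpa using hR.le⟩ (by fun_prop)
    set A : ℝ := R ^ 2 - ‖y - x₀‖ ^ 2 with hA
    set m : ℝ := f y * A with hm
    have hm0 : f x₀ * R ^ 2 ≤ m := by
      have := hy (show x₀ ∈ Metric.closedBall x₀ R by simpa using hR.le)
      simpa using this
    have hmpos : 0 < m := lt_of_lt_of_le (by positivity) hm0
    have hApos : 0 < A := by
      by_contra! hneg
      have := mul_nonpos_of_nonneg_of_nonpos (h0 y) hneg
      linarith
    have hfy : f y = m / A := by rw [hm]; field_simp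
    have hlapy := (hL y).le_of_touch
      (fun i s => m / (A - 2 * (y - x₀) i * s - s ^ 2))
      (fun i => 2 * m / A ^ 2 + 8 * m * ((y - x₀) i) ^ 2 / A ^ 3)
      (fun i => by
        set b := (y - x₀) i
        have hc : Continuous fun s : ℝ => A - 2 * b * s - s ^ 2 := by fun_prop
        have hpos : ∀ᶠ s in 𝓝 (0 : ℝ), 0 < A - 2 * b * s - s ^ 2 :=
          hc.continuousAt.eventually (lt_mem_nhds (by simpa using hApos))
        have hq : ∀ s : ℝ, HasDerivAt (fun s : ℝ => A - 2 * b * s - s ^ 2) (-(2 * b + 2 * s)) s := by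
          intro s
          have := (((hasDerivAt_id s).const_mul (2 * b)).const_sub A).sub ((hasDerivAt_id s).pow 2)
          refine this.congr_deriv ?_
          simp; ring
        refine ⟨fun s => m * (2 * b + 2 * s) / (A - 2 * b * s - s ^ 2) ^ 2, ?_, ?_⟩
        · filter_upwards [hpos] with s hs
          have := (hasDerivAt_const s m).div (hq s) hs.ne'
          refine this.congr_deriv ?_
          ring
        · have h1 : HasDerivAt (fun s : ℝ => m * (2 * b + 2 * s)) (m * 2) 0 := by
            simpa using (((hasDerivAt_id (0 : ℝ)).const_mul 2).const_add (2 * b)).const_mul m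
          have := h1.div ((hq 0).pow 2) (by simpa using hApos.ne')
          refine this.congr_deriv ?_
          simp
          field_simp
          ring)
      (fun i => by simp [hfy])
      (fun i => by
        set b := (y - x₀) i with hb
        have hc : Continuous fun s : ℝ => A - 2 * b * s - s ^ 2 := by fun_prop
        have hpos : ∀ᶠ s in 𝓝 (0 : ℝ), 0 < A - 2 * b * s - s ^ 2 :=
          hc.continuousAt.eventually (lt_mem_nhds (by simpa using hApos))
        filter_upwards [hpos] with s hs
        have hn : ‖y + s • EuclideanSpace.single i (1 : ℝ) - x₀‖ ^ 2
            = ‖y - x₀‖ ^ 2 + 2 * b * s + s ^ 2 := by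
          rw [add_sub_right_comm, norm_sq_slice]
        have hin : y + s • EuclideanSpace.single i (1 : ℝ) ∈ Metric.closedBall x₀ R := by
          rw [mem_closedBall_iff_norm]
          refine le_of_sq_le_sq ?_ hR.le
          rw [hn]; linarith
        have : f (y + s • EuclideanSpace.single i (1 : ℝ)) *
            (R ^ 2 - ‖y + s • EuclideanSpace.single i (1 : ℝ) - x₀‖ ^ 2) ≤ m := hy hin
        rw [le_div_iff₀ hs]
        rw [hn] at this
        have e : R ^ 2 - (‖y - x₀‖ ^ 2 + 2 * b * s + s ^ 2) = A - 2 * b * s - s ^ 2 := by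
          rw [hA]; ring
        rwa [e] at this)
    have hsum : ∑ i, (2 * m / A ^ 2 + 8 * m * ((y - x₀) i) ^ 2 / A ^ 3)
        = n * (2 * m / A ^ 2) + 8 * m * ‖y - x₀‖ ^ 2 / A ^ 3 := by
      rw [Finset.sum_add_distrib, EuclideanSpace.real_norm_sq_eq, Finset.mul_sum, Finset.sum_div]
      simp
    rw [hsum] at hlapy
    have h1 := (hle y).trans hlapy
    rw [hfy] at h1
    have h2 : m ^ 2 ≤ A ^ 2 + 2 * n * A + 8 * ‖y - x₀‖ ^ 2 := by
      have e1 : (m / A) ^ 3 - m / A = (m / A ^ 3) * (m ^ 2 - A ^ 2) := by field_simp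
      have e2 : n * (2 * m / A ^ 2) + 8 * m * ‖y - x₀‖ ^ 2 / A ^ 3
        = (m / A ^ 3) * (2 * n * A + 8 * ‖y - x₀‖ ^ 2) := by field_simp
      rw [e1, e2] at h1
      have := le_of_mul_le_mul_left h1 (by positivity)
      linarith
    have hAR : A ≤ R ^ 2 := by rw [hA]; nlinarith [sq_nonneg ‖y - x₀‖]
    have hyR' : ‖y - x₀‖ ^ 2 ≤ R ^ 2 := by linarith
    have h3 : m ^ 2 ≤ R ^ 2 * (R ^ 2 + (2 * n + 8)) := by
      have : A ^ 2 ≤ (R ^ 2) ^ 2 := by gcongr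
      have : (n : ℝ) * A ≤ n * R ^ 2 := by gcongr
      nlinarith
    have h4 : (f x₀ * R ^ 2) ^ 2 ≤ m ^ 2 := by gcongr
    have h5 : R ^ 2 * ((f x₀) ^ 2 * R ^ 2) ≤ R ^ 2 * (R ^ 2 + (2 * n + 8)) := by nlinarith
    exact le_of_mul_le_mul_left h5 (by positivity)
  by_contra! hgt
  set d := (f x₀) ^ 2 - 1 with hd
  have hdpos : 0 < d := by nlinarith
  set Q : ℝ := (2 * n + 8 + 1) / d + 1
  have hQ : 1 ≤ Q := by
    have : (0:ℝ) ≤ (2 * n + 8 + 1) / d := by positivity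
    linarith
  have h := key Q (by linarith)
  have h2 : d * Q = 2 * n + 8 + 1 + d := by
    simp only [Q]; field_simp
  nlinarith [mul_nonneg hdpos.le (by nlinarith : 0 ≤ Q ^ 2 - Q)]

/-! ### Gradient bound for bounded functions with bounded Laplacian -/

lemma HasLap.neg {f : EuclideanSpace ℝ (Fin n) → ℝ} {x : EuclideanSpace ℝ (Fin n)} {a : ℝ}
    (hf : HasLap f x a) : HasLap (fun x => -f x) x (-a) := by
  have h0 : HasLap (fun _ : EuclideanSpace ℝ (Fin n) => (0 : ℝ)) x 0 :=
    ⟨fun _ => 0, fun i => by simpa using hasD2_quad 0 0 0, by simp⟩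
  simpa using h0.sub hf

/-- Reflection in the hyperplane `x i = c`. -/
def reflectAt (i : Fin n) (c : ℝ) (x : EuclideanSpace ℝ (Fin n)) : EuclideanSpace ℝ (Fin n) :=
  x + (2 * (c - x i)) • EuclideanSpace.single i (1 : ℝ)

lemma continuous_reflectAt (i : Fin n) (c : ℝ) : Continuous (reflectAt i c) := by
  unfold reflectAt
  fun_prop

lemma HasLap.reflect {f : EuclideanSpace ℝ (Fin n) → ℝ} {x : EuclideanSpace ℝ (Fin n)} {L : ℝ}
    {i : Fin n} {c : ℝ} (hf : HasLap f (reflectAt i c x) L) :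
    HasLap (fun x => f (reflectAt i c x)) x L := by
  obtain ⟨a, ha, rfl⟩ := hf
  refine ⟨a, fun k => ?_, rfl⟩
  by_cases hk : k = i
  · subst hk
    have h := (ha k).comp_neg
    convert h using 3 with s
    unfold reflectAt
    simp
    module
  · have h := ha k
    convert h using 3 with s
    unfold reflectAt
    simp [Ne.symm hk]
    module

lemma hasLap_quad_coord (i : Fin n) (a b c : ℝ) (x : EuclideanSpace ℝ (Fin n)) :
    HasLap (fun x => a + b * x i + c * (x i) ^ 2) x (2 * c) := by
  refine ⟨fun k => if k = i then 2 * c else 0, fun k => ?_, by simp⟩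
  by_cases hk : k = i
  · subst hk
    simp only [if_true]
    convert hasD2_quad (a + b * x k + c * x k ^ 2) (b + 2 * c * x k) c using 2 with s
    simp
    ring
  · simp only [hk, if_false]
    convert hasD2_quad (a + b * x i + c * x i ^ 2) 0 0 using 2 with s
    · simp [Ne.symm hk]
    · simp

/-- The odd part of `f` with respect to a coordinate hyperplane vanishes on that hyperplane, so
on the adjacent unit slab it lies below a concave quadratic barrier. -/
lemma reflect_diff_le {f : EuclideanSpace ℝ (Fin n) → ℝ} (hf : Continuous f) {A B : ℝ}
    (hB : ∀ x, |f x| ≤ B) {L : EuclideanSpace ℝ (Fin n) → ℝ} (hL : ∀ x, HasLap f x (L x))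
    (hA : ∀ x, |L x| ≤ A) (i : Fin n) (x : EuclideanSpace ℝ (Fin n)) {s : ℝ} (hs0 : 0 ≤ s)
    (hs1 : s ≤ 1) :
    f (x + s • EuclideanSpace.single i 1) - f (x - s • EuclideanSpace.single i 1)
      ≤ (2 * B + A + 1) * s := by
  set c := x i with hc
  set q : EuclideanSpace ℝ (Fin n) → ℝ :=
    fun y => 2 * B * (y i - c) + (A + 1) * ((y i - c) * (1 - (y i - c))) with hq
  set g : EuclideanSpace ℝ (Fin n) → ℝ := fun y => f y - f (reflectAt i c y) - q y with hg
  have hA0 : 0 ≤ A := (abs_nonneg _).trans (hA x)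
  have hB0 : 0 ≤ B := (abs_nonneg _).trans (hB x)
  have hgc : Continuous g := by
    have := continuous_reflectAt i c
    simp only [hg, hq]
    fun_prop
  have hgL : ∀ y, HasLap g y (L y - L (reflectAt i c y) - 2 * (-(A + 1))) := by
    intro y
    refine ((hL y).sub (hL _).reflect).sub ?_
    convert hasLap_quad_coord i (-(2 * B * c) - (A + 1) * (c * (1 + c)))
      (2 * B + (A + 1) * (1 + 2 * c)) (-(A + 1)) y using 2 with z
    ring
  set S : Set (EuclideanSpace ℝ (Fin n)) := (fun y => y i - c) ⁻¹' Set.Icc 0 1 with hS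
  have hcoord : Continuous fun y : EuclideanSpace ℝ (Fin n) => y i - c := by fun_prop
  have hSc : IsClosed S := isClosed_Icc.preimage hcoord
  set y₀ := x + s • EuclideanSpace.single i (1 : ℝ) with hy₀
  have hy₀i : y₀ i - c = s := by simp [hy₀, hc]
  have hy₀S : y₀ ∈ S := by
    change y₀ i - c ∈ Set.Icc (0 : ℝ) 1
    exact ⟨by linarith, by linarith⟩
  have hmain : g y₀ ≤ 0 := by
    by_contra! hpos
    have hη : 0 < min (g y₀ / 2) (1 / (n + 1 : ℝ)) := by positivity
    have hgB : ∀ y ∈ S, g y ≤ 2 * B := by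
      intro y hy
      have h1 := abs_le.1 (hB y)
      have h2 := abs_le.1 (hB (reflectAt i c y))
      have h3 : 0 ≤ q y := by
        have : 0 ≤ 1 - (y i - c) := by linarith [hy.2]
        have := hy.1
        simp only [hq]
        positivity
      simp only [hg]
      linarith
    obtain ⟨z, hzS, hz1, δ, hδ, hδη, hz2⟩ := exists_penalized_max hSc hgc hgB hy₀S hη
    have hgz : 0 < g z := by
      have := min_le_left (g y₀ / 2) (1 / (n + 1 : ℝ))
      linarith
    have hz0 : 0 < z i - c := by
      refine lt_of_le_of_ne hzS.1 fun h => ?_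
      have : reflectAt i c z = z := by
        unfold reflectAt
        rw [show c - z i = 0 by linarith]
        simp
      have : g z = 0 := by
        simp only [hg, hq, this, ← h]
        ring
      linarith
    have hz1' : z i - c < 1 := by
      refine lt_of_le_of_ne hzS.2 fun h => ?_
      have h1 := abs_le.1 (hB z)
      have h2 := abs_le.1 (hB (reflectAt i c z))
      have : g z ≤ 0 := by
        simp only [hg, hq, h]
        linarith
      linarith
    have hSn : S ∈ 𝓝 z := hcoord.continuousAt (Icc_mem_nhds hz0 hz1')
    have hlap := (hgL z).le_of_penalized hSn hz2
    have h1 := abs_le.1 (hA z)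
    have h2 := abs_le.1 (hA (reflectAt i c z))
    have h3 : (n : ℝ) * δ ≤ n * (1 / (n + 1)) := by
      gcongr
      exact hδη.trans (min_le_right _ _)
    have h4 : (n : ℝ) * (1 / (n + 1)) < 1 := by
      rw [mul_one_div, div_lt_one (by positivity)]
      linarith
    linarith
  have hr : reflectAt i c y₀ = x - s • EuclideanSpace.single i (1 : ℝ) := by
    unfold reflectAt
    rw [show c - y₀ i = -s by linarith, hy₀]
    module
  simp only [hg, hq, hr, hy₀i] at hmain
  nlinarith [mul_nonneg (by linarith : 0 ≤ A + 1) (mul_nonneg hs0 hs0)]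

/-- A bounded differentiable function with bounded Laplacian is globally Lipschitz. -/
lemma exists_lipschitz {f : EuclideanSpace ℝ (Fin n) → ℝ} (hf : Differentiable ℝ f) {A B : ℝ}
    (hB : ∀ x, |f x| ≤ B) {L : EuclideanSpace ℝ (Fin n) → ℝ} (hL : ∀ x, HasLap f x (L x))
    (hA : ∀ x, |L x| ≤ A) : ∃ C : ℝ, 0 < C ∧ ∀ x y, |f x - f y| ≤ C * ‖x - y‖ := by
  set D := 2 * B + A + 1 with hD
  have hA0 : 0 ≤ A := (abs_nonneg _).trans (hA 0)
  have hB0 : 0 ≤ B := (abs_nonneg _).trans (hB 0)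
  have hD0 : 0 < D := by positivity
  have hstep : ∀ (i : Fin n) x, ∀ s : ℝ, 0 ≤ s → s ≤ 1 →
      |f (x + s • EuclideanSpace.single i (1 : ℝ)) - f x| ≤ D * s := by
    intro i x s h0 h1
    have e1 : x + (s / 2) • EuclideanSpace.single i (1 : ℝ) +
      (s / 2) • EuclideanSpace.single i (1 : ℝ) = x + s • EuclideanSpace.single i (1 : ℝ) := by
      module
    have e2 : x + (s / 2) • EuclideanSpace.single i (1 : ℝ) -
      (s / 2) • EuclideanSpace.single i (1 : ℝ) = x := by
      module
    have a1 := reflect_diff_le hf.continuous hB hL hA i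
      (x + (s / 2) • EuclideanSpace.single i (1 : ℝ)) (s := s / 2) (by linarith) (by linarith)
    have a2 := reflect_diff_le (f := fun x => -f x) hf.continuous.neg
      (fun x => by simpa using hB x) (fun x => (hL x).neg)
      (fun x => by simpa using hA x) i
      (x + (s / 2) • EuclideanSpace.single i (1 : ℝ)) (s := s / 2) (by linarith) (by linarith)
    rw [e1, e2] at a1 a2
    have : D * (s / 2) ≤ D * s := by gcongr; linarith
    rw [abs_le]
    constructor <;> linarith
  have hpart : ∀ (i : Fin n) x, |fderiv ℝ f x (EuclideanSpace.single i (1 : ℝ))| ≤ D := by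
    intro i x
    have h := hasDerivAt_slice hf x (EuclideanSpace.single i (1 : ℝ)) 0
    rw [zero_smul, add_zero] at h
    refine h.le_of_lip' hD0.le ?_
    filter_upwards [Metric.ball_mem_nhds (0 : ℝ) one_pos] with s hs
    simp only [Metric.mem_ball, dist_zero_right, Real.norm_eq_abs] at hs
    simp only [zero_smul, add_zero, sub_zero, Real.norm_eq_abs]
    rcases le_total 0 s with h0 | h0
    · rw [abs_of_nonneg h0] at hs ⊢
      exact hstep i x s h0 hs.le
    · rw [abs_of_nonpos h0] at hs ⊢
      have := hstep i (x + s • EuclideanSpace.single i (1 : ℝ)) (-s) (by linarith) hs.le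
      rw [show x + s • EuclideanSpace.single i (1 : ℝ) + (-s) • EuclideanSpace.single i (1 : ℝ) = x
        by module] at this
      rwa [abs_sub_comm]
  refine ⟨n * D + 1, by positivity, fun x y => ?_⟩
  refine Convex.norm_image_sub_le_of_norm_fderiv_le (𝕜 := ℝ) (s := Set.univ) (f := f)
    (fun x _ => hf x) (fun x _ => ?_) convex_univ (Set.mem_univ y) (Set.mem_univ x)
  refine ContinuousLinearMap.opNorm_le_bound _ (by positivity) fun w => ?_
  have hw : w = ∑ i, w i • EuclideanSpace.single i (1 : ℝ) := by
    have := (EuclideanSpace.basisFun (Fin n) ℝ).sum_repr w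
    simpa using this.symm
  have h1 : fderiv ℝ f x w = ∑ i, w i * fderiv ℝ f x (EuclideanSpace.single i (1 : ℝ)) := by
    conv_lhs => rw [hw]
    simp
  rw [h1]
  calc ‖∑ i, w i * fderiv ℝ f x (EuclideanSpace.single i (1 : ℝ))‖
      ≤ ∑ i, ‖w i * fderiv ℝ f x (EuclideanSpace.single i (1 : ℝ))‖ := norm_sum_le _ _
    _ ≤ ∑ _i : Fin n, ‖w‖ * D := by
        refine Finset.sum_le_sum fun i _ => ?_
        rw [norm_mul]
        gcongr
        · exact PiLp.norm_apply_le w i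
        · exact hpart i x
    _ = n * D * ‖w‖ := by simp; ring
    _ ≤ (n * D + 1) * ‖w‖ := by nlinarith [norm_nonneg w]

/-! ### Quantitative strong maximum principle -/

lemma hasLap_gauss (α η : ℝ) (y x : EuclideanSpace ℝ (Fin n)) :
    HasLap (fun x => η * Real.exp (-α * ‖x - y‖ ^ 2)) x
      (η * ((4 * α ^ 2 * ‖x - y‖ ^ 2 - 2 * α * n) * Real.exp (-α * ‖x - y‖ ^ 2))) := by
  refine ⟨fun i => η * ((4 * α ^ 2 * ((x - y) i) ^ 2 - 2 * α) * Real.exp (-α * ‖x - y‖ ^ 2)),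
    fun i => ?_, ?_⟩
  · set b := (x - y) i
    set ρ := ‖x - y‖ ^ 2
    have hs : ∀ s : ℝ, ‖x + s • EuclideanSpace.single i (1 : ℝ) - y‖ ^ 2 = ρ + 2 * b * s + s ^ 2 := by
      intro s
      rw [add_sub_right_comm, norm_sq_slice]
    simp only [hs]
    have hq : ∀ s : ℝ, HasDerivAt (fun s : ℝ => -α * (ρ + 2 * b * s + s ^ 2))
        (-α * (2 * b + 2 * s)) s := by
      intro s
      have := ((((hasDerivAt_id s).const_mul (2 * b)).const_add ρ).add
        ((hasDerivAt_id s).pow 2)).const_mul (-α)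
      refine this.congr_deriv ?_
      simp
    refine ⟨fun s => η * (Real.exp (-α * (ρ + 2 * b * s + s ^ 2)) * (-α * (2 * b + 2 * s))),
      Eventually.of_forall fun s => ((hq s).exp).const_mul η, ?_⟩
    have h1 : HasDerivAt (fun s : ℝ => -α * (2 * b + 2 * s)) (-α * 2) 0 := by
      simpa using (((hasDerivAt_id (0 : ℝ)).const_mul 2).const_add (2 * b)).const_mul (-α)
    refine (((hq 0).exp.mul h1).const_mul η).congr_deriv ?_
    simp only [mul_zero, add_zero, ne_eq, OfNat.ofNat_ne_zero, not_false_eq_true, zero_pow]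
    ring
  · rw [EuclideanSpace.real_norm_sq_eq (x - y), ← Finset.mul_sum, ← Finset.sum_mul,
      Finset.sum_sub_distrib, ← Finset.mul_sum]
    simp only [Finset.sum_const, Finset.card_univ, Fintype.card_fin, nsmul_eq_mul]
    ring

/-- If a nonnegative Lipschitz supersolution of `Δw = K w` is very small at one point, it is small
on a large ball about it: a value `> η` at `y` forces `w ≥ (η / 2) exp (-α |x - y|²)` everywhere,
for a suitable `α`. -/
lemma propagate_small (n : ℕ) {K C R η : ℝ} (hK : 0 < K) (hC : 0 < C) (hη : 0 < η) :
    ∃ c : ℝ, 0 < c ∧ ∀ (w Lw : EuclideanSpace ℝ (Fin n) → ℝ), (∀ x, 0 ≤ w x) →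
      (∀ x y, |w x - w y| ≤ C * ‖x - y‖) → (∀ x, HasLap w x (Lw x)) → (∀ x, Lw x ≤ K * w x) →
      Continuous w → ∀ x₀ y, ‖x₀ - y‖ ≤ R → w x₀ < c → w y ≤ η := by
  set r := η / (2 * C) with hr
  have hr0 : 0 < r := by positivity
  -- Chosen so that `4 α² r² - 2 α n ≥ K`.
  set α : ℝ := (n + K + 1) / r ^ 2 + 1 with hα
  have hα1 : 1 ≤ α := by
    have : 0 ≤ (n + K + 1) / r ^ 2 := by positivity
    linarith
  have hαr : n + K + 1 ≤ α * r ^ 2 := by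
    have : α * r ^ 2 = n + K + 1 + r ^ 2 := by rw [hα]; field_simp
    nlinarith [sq_nonneg r]
  refine ⟨η / 2 * Real.exp (-α * R ^ 2), by positivity, ?_⟩
  intro w Lw hw0 hlip hLw hLwK hwc x₀ y hxy hsmall
  by_contra! hwy
  have hnear : ∀ x, ‖x - y‖ ≤ r → η / 2 ≤ w x := by
    intro x hx
    have h1 := abs_le.1 (hlip x y)
    have h2 : C * ‖x - y‖ ≤ C * r := by gcongr
    have h3 : C * r = η / 2 := by rw [hr]; field_simp
    linarith [h1.1]
  set g : EuclideanSpace ℝ (Fin n) → ℝ :=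
    fun x => η / 2 * Real.exp (-α * ‖x - y‖ ^ 2) - w x with hg
  have hexp1 : ∀ x, Real.exp (-α * ‖x - y‖ ^ 2) ≤ 1 := by
    intro x
    rw [Real.exp_le_one_iff]
    nlinarith [mul_nonneg (by linarith : 0 ≤ α) (sq_nonneg ‖x - y‖)]
  have hg0 : 0 < g x₀ := by
    have h1 : Real.exp (-α * R ^ 2) ≤ Real.exp (-α * ‖x₀ - y‖ ^ 2) := by
      rw [Real.exp_le_exp]
      have : ‖x₀ - y‖ ^ 2 ≤ R ^ 2 := by gcongr
      nlinarith
    have : η / 2 * Real.exp (-α * R ^ 2) ≤ η / 2 * Real.exp (-α * ‖x₀ - y‖ ^ 2) := by gcongr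
    simp only [hg]
    linarith
  set ε := K * g x₀ / (2 * (K + 2 * n)) with hε
  have hε0 : 0 < ε := by positivity
  have hεK : 2 * ((K + 2 * n) * ε) = K * g x₀ := by
    rw [hε]; field_simp
  obtain ⟨x, hx1, hx2⟩ := exists_almost_max (f := g) (by simp only [hg]; fun_prop) (B := η / 2)
    (fun x => by
      have := hexp1 x
      have := hw0 x
      simp only [hg]
      nlinarith)
    (fun x => (hasLap_gauss α (η / 2) y x).sub (hLw x)) x₀ hε0
  have hgε : 2 * n * ε < K * g x := by
    have : K * (g x₀ - ε) ≤ K * g x := by gcongr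
    nlinarith [mul_pos hK hg0]
  have hgx : 0 < g x := by
    have : 0 ≤ 2 * n * ε := by positivity
    exact pos_of_mul_pos_right (by linarith) hK.le
  have hfar : r < ‖x - y‖ := by
    by_contra! hle
    have h1 := hnear x hle
    have h2 := hexp1 x
    simp only [hg] at hgx
    nlinarith
  have hcoef : K ≤ 4 * α ^ 2 * ‖x - y‖ ^ 2 - 2 * α * n := by
    have h1 : r ^ 2 ≤ ‖x - y‖ ^ 2 := by gcongr
    have h2 : α * r ^ 2 ≤ α * ‖x - y‖ ^ 2 := by gcongr
    have h3 : (n : ℝ) + 2 * K + 2 ≤ 2 * (α * ‖x - y‖ ^ 2) - n := by linarith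
    have hn : (0 : ℝ) ≤ n := by positivity
    nlinarith [mul_le_mul_of_nonneg_left h3 (by linarith : 0 ≤ 2 * α),
      mul_nonneg (by linarith : 0 ≤ α - 1) (by linarith : 0 ≤ (n : ℝ) + 2 * K + 2)]
  have h1 : K * (η / 2 * Real.exp (-α * ‖x - y‖ ^ 2)) ≤
      η / 2 * ((4 * α ^ 2 * ‖x - y‖ ^ 2 - 2 * α * n) * Real.exp (-α * ‖x - y‖ ^ 2)) := by
    have : K * Real.exp (-α * ‖x - y‖ ^ 2) ≤
      (4 * α ^ 2 * ‖x - y‖ ^ 2 - 2 * α * n) * Real.exp (-α * ‖x - y‖ ^ 2) := by gcongr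
    nlinarith
  have h2 := hLwK x
  have h3 : K * g x = K * (η / 2 * Real.exp (-α * ‖x - y‖ ^ 2)) - K * w x := by
    simp only [hg]; ring
  linarith

/-! ### Comparison of a solution with its translates -/

/-- Monotonicity of the reaction terms where one of the two states is close to its limit: `(a, b)`
and `(a', b')` are the values of `(u, v)` at a point and at its translate. -/
lemma reaction_ineq {Λ ε κ a b a' b' s : ℝ} (hΛ : 0 < Λ) (hε : 0 < ε) (hε1 : ε < 1)
    (h1 : κ + 2 * Λ * ε ≤ Λ * (1 - ε) ^ 2 - 1) (h2 : κ + 2 * Λ * ε ≤ 3 * (1 - ε) ^ 2 - 1)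
    (ha1 : a ≤ 1) (hb0 : 0 ≤ b) (hb1 : b ≤ 1) (ha0' : 0 ≤ a') (hb0' : 0 ≤ b') (hb1' : b' ≤ 1)
    (hreg : (1 - ε ≤ a' ∧ b' ≤ ε) ∨ (a ≤ ε ∧ 1 - ε ≤ b)) (haa : a' < a) (hs0 : 0 ≤ s)
    (hs : b' - b ≤ s) :
    (κ + 2 * Λ * ε) * (a - a') - 2 * Λ * ε * s ≤
      (a ^ 3 - a + Λ * a * b ^ 2) - (a' ^ 3 - a' + Λ * a' * b' ^ 2) := by
  have hw : 0 ≤ a - a' := by linarith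
  have ha0 : 0 ≤ a := by linarith
  rcases hreg with ⟨h3, h4⟩ | ⟨h3, h4⟩
  · have e : (a ^ 3 - a + Λ * a * b ^ 2) - (a' ^ 3 - a' + Λ * a' * b' ^ 2) =
        (a - a') * (a ^ 2 + a * a' + a' ^ 2 - 1 + Λ * b' ^ 2) + Λ * a * (b ^ 2 - b' ^ 2) := by ring
    have f1 : 3 * (1 - ε) ^ 2 - 1 ≤ a ^ 2 + a * a' + a' ^ 2 - 1 + Λ * b' ^ 2 := by
      have : 0 ≤ 1 - ε := by linarith
      have g1 : (1 - ε) ^ 2 ≤ a ^ 2 := by gcongr; linarith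
      have g2 : (1 - ε) ^ 2 ≤ a' ^ 2 := by gcongr
      have g3 : (1 - ε) * (1 - ε) ≤ a * a' := by gcongr; linarith
      have g4 : 0 ≤ Λ * b' ^ 2 := by positivity
      nlinarith
    have f2 : -(2 * ε * s) ≤ b ^ 2 - b' ^ 2 := by
      rcases le_total b' b with hb | hb
      · nlinarith [mul_nonneg hε.le hs0]
      · nlinarith [mul_nonneg (by linarith : 0 ≤ 2 * ε - (b' + b)) hs0,
          mul_nonneg (by linarith : 0 ≤ s - (b' - b)) (by linarith : 0 ≤ b' + b)]
    have f3 : -(2 * ε * s) ≤ a * (b ^ 2 - b' ^ 2) := by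
      have : 0 ≤ 2 * ε * s := by positivity
      nlinarith [mul_nonneg ha0 (by linarith : 0 ≤ b ^ 2 - b' ^ 2 + 2 * ε * s),
        mul_nonneg (by linarith : 0 ≤ 1 - a) this]
    have f4 := mul_le_mul_of_nonneg_left (h2.trans f1) hw
    have f5 := mul_le_mul_of_nonneg_left f3 hΛ.le
    rw [e]
    linarith
  · have e : (a ^ 3 - a + Λ * a * b ^ 2) - (a' ^ 3 - a' + Λ * a' * b' ^ 2) =
        (a - a') * (a ^ 2 + a * a' + a' ^ 2 - 1 + Λ * b ^ 2) + Λ * a' * (b ^ 2 - b' ^ 2) := by ring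
    have f1 : Λ * (1 - ε) ^ 2 - 1 ≤ a ^ 2 + a * a' + a' ^ 2 - 1 + Λ * b ^ 2 := by
      have : 0 ≤ 1 - ε := by linarith
      have g1 : Λ * (1 - ε) ^ 2 ≤ Λ * b ^ 2 := by gcongr
      have g2 : 0 ≤ a ^ 2 + a * a' + a' ^ 2 := by positivity
      linarith
    have f2 : -(2 * s) ≤ b ^ 2 - b' ^ 2 := by
      rcases le_total b' b with hb | hb
      · nlinarith
      · nlinarith [mul_nonneg (by linarith : 0 ≤ 2 - (b' + b)) hs0,
          mul_nonneg (by linarith : 0 ≤ s - (b' - b)) (by linarith : 0 ≤ b' + b)]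
    have f3 : -(2 * ε * s) ≤ a' * (b ^ 2 - b' ^ 2) := by
      nlinarith [mul_nonneg ha0' (by linarith : 0 ≤ b ^ 2 - b' ^ 2 + 2 * s),
        mul_nonneg (by linarith : 0 ≤ ε - a') hs0]
    have f4 := mul_le_mul_of_nonneg_left (h1.trans f1) hw
    have f5 := mul_le_mul_of_nonneg_left f3 hΛ.le
    rw [e]
    linarith

/-- Half of the contradiction in `coupled_max_principle`: the common supremum `S > 0` of `W` and
`Z` cannot be approached by `W`. -/
lemma coupled_aux {W Z LW : EuclideanSpace ℝ (Fin n) → ℝ} {κ c S : ℝ} (hκ : 0 < κ) (hc : 0 ≤ c)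
    (hW : Continuous W) (hLW : ∀ x, HasLap W x (LW x)) (hS : 0 < S) (hWS : ∀ x, W x ≤ S)
    (hZS : ∀ x, Z x ≤ S)
    (hineq : ∀ x, 0 < W x → ∀ s, 0 ≤ s → Z x ≤ s → (κ + c) * W x - c * s ≤ LW x) :
    ∃ η, 0 < η ∧ ∀ x, W x ≤ S - η := by
  set η := κ * S / (4 * (n + κ + c + 1)) with hη
  have hη0 : 0 < η := by positivity
  have hηe : 4 * ((n + κ + c + 1) * η) = κ * S := by rw [hη]; field_simp
  have hn : (0 : ℝ) ≤ n := by positivity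
  have hp1 : 0 ≤ n * η := by positivity
  have hp2 : 0 ≤ c * η := by positivity
  have hp3 : 0 < κ * η := by positivity
  have hηS : 2 * η < S := by
    have : κ * (4 * η) < κ * S := by nlinarith
    have := lt_of_mul_lt_mul_left this hκ.le
    linarith
  refine ⟨η, hη0, fun y => ?_⟩
  by_contra! hy
  obtain ⟨x, hx1, hx2⟩ := exists_almost_max hW hWS hLW y hη0
  have hx3 : S - 2 * η < W x := by linarith
  have h := hineq x (by linarith) S hS.le (hZS x)
  have h' : (κ + c) * (S - 2 * η) ≤ (κ + c) * W x := by gcongr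
  nlinarith

/-- Maximum principle for a pair of bounded functions on the whole space, weakly coupled wherever
they are positive. -/
lemma coupled_max_principle {W Z LW LZ : EuclideanSpace ℝ (Fin n) → ℝ} {κ c B : ℝ} (hκ : 0 < κ)
    (hc : 0 ≤ c) (hW : Continuous W) (hZ : Continuous Z) (hLW : ∀ x, HasLap W x (LW x))
    (hLZ : ∀ x, HasLap Z x (LZ x)) (hWB : ∀ x, W x ≤ B) (hZB : ∀ x, Z x ≤ B)
    (h1 : ∀ x, 0 < W x → ∀ s, 0 ≤ s → Z x ≤ s → (κ + c) * W x - c * s ≤ LW x)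
    (h2 : ∀ x, 0 < Z x → ∀ s, 0 ≤ s → W x ≤ s → (κ + c) * Z x - c * s ≤ LZ x) :
    ∀ x, W x ≤ 0 ∧ Z x ≤ 0 := by
  by_contra! hcon
  have hbdd : BddAbove (Set.range fun x => max (W x) (Z x)) :=
    ⟨B, by rintro _ ⟨x, rfl⟩; exact max_le (hWB x) (hZB x)⟩
  set S := ⨆ x, max (W x) (Z x) with hSdef
  have hle : ∀ x, max (W x) (Z x) ≤ S := fun x => le_ciSup hbdd x
  have hS : 0 < S := by
    obtain ⟨x, hx⟩ := hcon
    refine lt_of_lt_of_le ?_ (hle x)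
    by_cases h : W x ≤ 0
    · exact lt_max_of_lt_right (hx h)
    · exact lt_max_of_lt_left (not_le.1 h)
  have hWS : ∀ x, W x ≤ S := fun x => (le_max_left _ _).trans (hle x)
  have hZS : ∀ x, Z x ≤ S := fun x => (le_max_right _ _).trans (hle x)
  obtain ⟨η₁, hη₁, hb1⟩ := coupled_aux hκ hc hW hLW hS hWS hZS h1
  obtain ⟨η₂, hη₂, hb2⟩ := coupled_aux hκ hc hZ hLZ hS hZS hWS h2
  have : S ≤ S - min η₁ η₂ := ciSup_le fun x => max_le
    ((hb1 x).trans (by linarith [min_le_left η₁ η₂]))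
    ((hb2 x).trans (by linarith [min_le_right η₁ η₂]))
  have : 0 < min η₁ η₂ := lt_min hη₁ hη₂
  linarith

/-- Order between a solution and its translate by `τ` extends from the slab in which neither state
is close to its limit to the whole space. -/
lemma order_of_slab {Λ ε κ M : ℝ} (hΛ : 0 < Λ) (hε : 0 < ε) (hε1 : ε < 1) (hκ : 0 < κ)
    (hc1 : κ + 2 * Λ * ε ≤ Λ * (1 - ε) ^ 2 - 1) (hc2 : κ + 2 * Λ * ε ≤ 3 * (1 - ε) ^ 2 - 1)
    {u v : EuclideanSpace ℝ (Fin n) → ℝ} (j : Fin n) (huc : Continuous u) (hvc : Continuous v)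
    (hu0 : ∀ x, 0 ≤ u x) (hu1 : ∀ x, u x ≤ 1) (hv0 : ∀ x, 0 ≤ v x) (hv1 : ∀ x, v x ≤ 1)
    (hlu : ∀ x, HasLap u x (u x ^ 3 - u x + Λ * u x * v x ^ 2))
    (hlv : ∀ x, HasLap v x (v x ^ 3 - v x + Λ * v x * u x ^ 2))
    (hP : ∀ x : EuclideanSpace ℝ (Fin n), M ≤ x j → 1 - ε ≤ u x ∧ v x ≤ ε)
    (hM : ∀ x : EuclideanSpace ℝ (Fin n), x j ≤ -M → u x ≤ ε ∧ 1 - ε ≤ v x)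
    (τ : EuclideanSpace ℝ (Fin n))
    (hslab : ∀ x : EuclideanSpace ℝ (Fin n), -M < x j → x j + τ j < M →
      u x ≤ u (x + τ) ∧ v (x + τ) ≤ v x) :
    ∀ x, u x ≤ u (x + τ) ∧ v (x + τ) ≤ v x := by
  have hreg : ∀ x, ¬ (u x ≤ u (x + τ) ∧ v (x + τ) ≤ v x) →
      (1 - ε ≤ u (x + τ) ∧ v (x + τ) ≤ ε) ∨ (u x ≤ ε ∧ 1 - ε ≤ v x) := by
    intro x hx
    by_cases h1 : x j ≤ -M
    · exact Or.inr (hM x h1)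
    · refine Or.inl (hP _ ?_)
      by_contra! h2
      exact hx (hslab x (not_le.1 h1) (by simpa using h2))
  have hmain := coupled_max_principle (W := fun x => u x - u (x + τ))
    (Z := fun x => v (x + τ) - v x) (B := 1) (κ := κ) (c := 2 * Λ * ε) hκ (by positivity)
    (by fun_prop) (by fun_prop) (fun x => (hlu x).sub (hlu (x + τ)).translate)
    (fun x => (hlv (x + τ)).translate.sub (hlv x))
    (fun x => by linarith [hu1 x, hu0 (x + τ)]) (fun x => by linarith [hv1 (x + τ), hv0 x])
    (fun x hx s hs0 hs => reaction_ineq hΛ hε hε1 hc1 hc2 (hu1 _) (hv0 _) (hv1 _)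
      (hu0 _) (hv0 _) (hv1 _) (hreg x fun h => by linarith [h.1]) (by linarith) hs0 hs)
    (fun x hx s hs0 hs => reaction_ineq hΛ hε hε1 hc1 hc2 (hv1 _) (hu0 _) (hu1 _)
      (hv0 _) (hu0 _) (hu1 _)
      ((hreg x fun h => by linarith [h.2]).symm.imp And.symm And.symm) (by linarith) hs0 hs)
  intro x
  have := hmain x
  exact ⟨by linarith [this.1], by linarith [this.2]⟩

/-- A nonnegative increment `f (x + τ) - f x` that is a supersolution stays away from `0` on slabs:
otherwise it would be small along a long chain `x + iτ`, whereas the increments along the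
chain add up to at least `1 / 2`. -/
lemma increment_gap {f Lw : EuclideanSpace ℝ (Fin n) → ℝ} {j : Fin n} {K C a M₀ : ℝ} (hK : 0 < K)
    (hC : 0 < C) (hfc : Continuous f) (hlip : ∀ x y, |f x - f y| ≤ C * ‖x - y‖)
    (hP : ∀ x : EuclideanSpace ℝ (Fin n), M₀ ≤ x j → a + 3 / 4 ≤ f x)
    (hM : ∀ x : EuclideanSpace ℝ (Fin n), x j ≤ -M₀ → f x ≤ a + 1 / 4)
    {τ : EuclideanSpace ℝ (Fin n)} (hτ : 0 < τ j) (hmono : ∀ x, f x ≤ f (x + τ))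
    (hLw : ∀ x, HasLap (fun x => f (x + τ) - f x) x (Lw x))
    (hLwK : ∀ x, Lw x ≤ K * (f (x + τ) - f x)) (M : ℝ) :
    ∃ δ : ℝ, 0 < δ ∧ ∀ x : EuclideanSpace ℝ (Fin n), |x j| ≤ M → δ ≤ f (x + τ) - f x := by
  obtain ⟨k, hk⟩ := exists_nat_ge (max ((M + M₀) / τ j) 1)
  have hk1 : (1 : ℝ) ≤ k := (le_max_right _ _).trans hk
  have hkτ : M + M₀ ≤ k * τ j := by
    have := (le_max_left _ _).trans hk
    rwa [div_le_iff₀ hτ] at this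
  obtain ⟨c, hc, hprop⟩ := propagate_small n (K := K) (C := 2 * C) (R := k * ‖τ‖)
    (η := 1 / (8 * k)) hK (by positivity) (by positivity)
  refine ⟨c, hc, fun x hx => ?_⟩
  by_contra! hlt
  have hsmall : ∀ y, ‖x - y‖ ≤ k * ‖τ‖ → f (y + τ) - f y ≤ 1 / (8 * k) := by
    intro y hy
    refine hprop (fun x => f (x + τ) - f x) Lw (fun x => by linarith [hmono x]) ?_ hLw hLwK
      (by fun_prop) x y hy hlt
    intro p q
    have h1 := abs_le.1 (hlip (p + τ) (q + τ))
    have h2 := abs_le.1 (hlip p q)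
    rw [add_sub_add_right_eq_sub] at h1
    rw [abs_le]
    constructor <;> linarith
  set b := x - (k : ℝ) • τ with hb
  have hsum : ∑ i ∈ Finset.range (2 * k), (f (b + ((i + 1 : ℕ) : ℝ) • τ) - f (b + (i : ℝ) • τ))
      = f (b + ((2 * k : ℕ) : ℝ) • τ) - f (b + ((0 : ℕ) : ℝ) • τ) :=
    Finset.sum_range_sub (fun i : ℕ => f (b + (i : ℝ) • τ)) (2 * k)
  have hub : ∑ i ∈ Finset.range (2 * k), (f (b + ((i + 1 : ℕ) : ℝ) • τ) - f (b + (i : ℝ) • τ))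
      ≤ ∑ _i ∈ Finset.range (2 * k), 1 / (8 * (k : ℝ)) := by
    refine Finset.sum_le_sum fun i hi => ?_
    have hi' : (i : ℝ) < 2 * k := by exact_mod_cast Finset.mem_range.1 hi
    have e : b + ((i + 1 : ℕ) : ℝ) • τ = b + (i : ℝ) • τ + τ := by
      push_cast; module
    rw [e]
    refine hsmall _ ?_
    have e2 : x - (b + (i : ℝ) • τ) = ((k : ℝ) - i) • τ := by rw [hb]; module
    rw [e2, norm_smul, Real.norm_eq_abs]
    gcongr
    rw [abs_le]
    have : (0 : ℝ) ≤ i := by positivity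
    constructor <;> linarith
  have hval : ∑ _i ∈ Finset.range (2 * k), 1 / (8 * (k : ℝ)) = 1 / 4 := by
    simp
    field_simp
    norm_num
  have hx' := abs_le.1 hx
  have htop : a + 3 / 4 ≤ f (b + ((2 * k : ℕ) : ℝ) • τ) := by
    refine hP _ ?_
    have : (b + ((2 * k : ℕ) : ℝ) • τ) j = x j + k * τ j := by
      simp [hb]; ring
    rw [this]; linarith
  have hbot : f (b + ((0 : ℕ) : ℝ) • τ) ≤ a + 1 / 4 := by
    refine hM _ ?_
    have : (b + ((0 : ℕ) : ℝ) • τ) j = x j - k * τ j := by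
      simp [hb]
    rw [this]; linarith
  rw [hsum, hval] at hub
  linarith

lemma exists_small_consts {Λ : ℝ} (hΛ : 1 < Λ) : ∃ ε κ : ℝ, 0 < ε ∧ ε < 1 / 4 ∧ 0 < κ ∧
    κ + 2 * Λ * ε ≤ Λ * (1 - ε) ^ 2 - 1 ∧ κ + 2 * Λ * ε ≤ 3 * (1 - ε) ^ 2 - 1 := by
  have hΛ0 : 0 < Λ := by linarith
  have hd : 0 < Λ - 1 := by linarith
  set ε := (Λ - 1) / (8 * Λ ^ 2) with hε
  have hε0 : 0 < ε := by positivity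
  have e1 : 8 * (Λ * (Λ * ε)) = Λ - 1 := by rw [hε]; field_simp
  have e2 : Λ * ε ≤ 1 / 8 := by
    have : Λ * (8 * (Λ * ε)) ≤ Λ * 1 := by linarith
    have := le_of_mul_le_mul_left this hΛ0
    linarith
  have e3 : Λ * ε ≤ (Λ - 1) / 8 := by nlinarith [mul_pos hd (mul_pos hΛ0 hε0)]
  have e4 : ε ≤ 1 / 8 := by nlinarith
  refine ⟨ε, min ((Λ - 1) / 2) 1, hε0, by linarith, by positivity, ?_, ?_⟩
  · have := min_le_left ((Λ - 1) / 2) 1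
    nlinarith [mul_nonneg hΛ0.le (sq_nonneg ε)]
  · have := min_le_right ((Λ - 1) / 2) 1
    nlinarith [sq_nonneg ε]

/-- A family of inequalities along the translations `h + t e` passes to the limit `t → T⁺`. -/
lemma order_closed {u : EuclideanSpace ℝ (Fin n) → ℝ} (huc : Continuous u)
    (h e : EuclideanSpace ℝ (Fin n)) {T : ℝ} (hT : ∀ t, T < t → ∀ x, u x ≤ u (x + (h + t • e))) :
    ∀ x, u x ≤ u (x + (h + T • e)) := by
  intro x
  have hc : Continuous fun t : ℝ => u (x + (h + t • e)) := by fun_prop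
  refine ge_of_tendsto ((hc.tendsto T).mono_left (nhdsWithin_le_nhds (s := Set.Ioi T))) ?_
  filter_upwards [self_mem_nhdsWithin] with t ht using hT t ht x

/-- The sliding method: a solution with the prescribed limits is ordered with respect to all its
translates having a positive component along the `j`-th axis. -/
lemma slide {Λ : ℝ} (hΛ : 1 < Λ) {u v : EuclideanSpace ℝ (Fin n) → ℝ} (j : Fin n)
    (hud : Differentiable ℝ u) (hvd : Differentiable ℝ v)
    (hu0 : ∀ x, 0 ≤ u x) (hu1 : ∀ x, u x ≤ 1) (hv0 : ∀ x, 0 ≤ v x) (hv1 : ∀ x, v x ≤ 1)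
    (hlu : ∀ x, HasLap u x (u x ^ 3 - u x + Λ * u x * v x ^ 2))
    (hlv : ∀ x, HasLap v x (v x ^ 3 - v x + Λ * v x * u x ^ 2))
    (hP : ∀ ε : ℝ, 0 < ε → ∃ M : ℝ, ∀ x : EuclideanSpace ℝ (Fin n), M ≤ x j →
      1 - ε ≤ u x ∧ v x ≤ ε)
    (hM : ∀ ε : ℝ, 0 < ε → ∃ M : ℝ, ∀ x : EuclideanSpace ℝ (Fin n), x j ≤ M →
      u x ≤ ε ∧ 1 - ε ≤ v x)
    (h : EuclideanSpace ℝ (Fin n)) (hh : h j = 0) :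
    ∀ t : ℝ, 0 < t → ∀ x, u x ≤ u (x + (h + t • EuclideanSpace.single j (1 : ℝ))) ∧
      v (x + (h + t • EuclideanSpace.single j (1 : ℝ))) ≤ v x := by
  have hΛ0 : 0 < Λ := by linarith
  have huc := hud.continuous
  have hvc := hvd.continuous
  set e : EuclideanSpace ℝ (Fin n) := EuclideanSpace.single j (1 : ℝ) with he
  have hτj : ∀ t : ℝ, (h + t • e) j = t := by intro t; simp [he, hh]
  have hLbound : ∀ a b : ℝ, 0 ≤ a → a ≤ 1 → 0 ≤ b → b ≤ 1 →
      |a ^ 3 - a + Λ * a * b ^ 2| ≤ 1 + Λ := by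
    intro a b ha0 ha1 hb0 hb1
    have h1 : a ^ 3 ≤ 1 := pow_le_one₀ ha0 ha1
    have h2 : 0 ≤ a ^ 3 := by positivity
    have h3 : 0 ≤ a * b ^ 2 := by positivity
    have h4 : a * b ^ 2 ≤ 1 := mul_le_one₀ ha1 (by positivity) (pow_le_one₀ hb0 hb1)
    rw [abs_le]
    constructor <;> nlinarith
  obtain ⟨Cu, hCu, hlipu⟩ := exists_lipschitz hud (B := 1)
    (fun x => abs_le.2 ⟨by linarith [hu0 x], hu1 x⟩) hlu
    (fun x => hLbound _ _ (hu0 x) (hu1 x) (hv0 x) (hv1 x))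
  obtain ⟨Cv, hCv, hlipv⟩ := exists_lipschitz hvd (B := 1)
    (fun x => abs_le.2 ⟨by linarith [hv0 x], hv1 x⟩) hlv
    (fun x => hLbound _ _ (hv0 x) (hv1 x) (hu0 x) (hu1 x))
  obtain ⟨ε, κ, hε, hε4, hκ, hc1, hc2⟩ := exists_small_consts hΛ
  obtain ⟨M₁, hM₁⟩ := hP ε hε
  obtain ⟨M₂, hM₂⟩ := hM ε hε
  set M := max M₁ (-M₂) with hMdef
  have hPM : ∀ x : EuclideanSpace ℝ (Fin n), M ≤ x j → 1 - ε ≤ u x ∧ v x ≤ ε :=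
    fun x hx => hM₁ x ((le_max_left _ _).trans hx)
  have hMM : ∀ x : EuclideanSpace ℝ (Fin n), x j ≤ -M → u x ≤ ε ∧ 1 - ε ≤ v x :=
    fun x hx => hM₂ x (by linarith [le_max_right M₁ (-M₂)])
  have hslab := fun t : ℝ => order_of_slab hΛ0 hε (by linarith) hκ hc1 hc2 j huc hvc hu0 hu1 hv0
    hv1 hlu hlv hPM hMM (h + t • e)
  intro t₀ ht₀
  by_contra! hcon
  set B : Set ℝ := {t | 0 < t ∧ ¬ ∀ x, u x ≤ u (x + (h + t • e)) ∧ v (x + (h + t • e)) ≤ v x}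
    with hB
  have ht₀B : t₀ ∈ B := by
    refine ⟨ht₀, fun hall => ?_⟩
    obtain ⟨x, hx⟩ := hcon
    exact absurd (hall x).2 (not_le.2 (hx (hall x).1))
  have hBbdd : BddAbove B := by
    refine ⟨2 * M, fun t ht => ?_⟩
    by_contra! hlt
    exact ht.2 (hslab t fun x hx1 hx2 => by rw [hτj] at hx2; linarith)
  set T := sSup B with hT
  have hT0 : 0 < T := lt_of_lt_of_le ht₀ (le_csSup hBbdd ht₀B)
  have habove : ∀ t, T < t → ∀ x, u x ≤ u (x + (h + t • e)) ∧ v (x + (h + t • e)) ≤ v x := by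
    intro t ht
    by_contra hn
    exact absurd (le_csSup hBbdd (⟨hT0.trans ht, hn⟩ : t ∈ B)) (not_le.2 ht)
  set τ := h + T • e with hτ
  have huT : ∀ x, u x ≤ u (x + τ) :=
    order_closed huc h e fun t ht x => (habove t ht x).1
  have hvT : ∀ x, v (x + τ) ≤ v x := by
    intro x
    have := order_closed (u := fun x => -v x) hvc.neg h e
      (fun t ht x => neg_le_neg (habove t ht x).2) x
    simpa using this
  -- The increments of `u` and `-v` are supersolutions of `Δw = (3 + Λ) w`.
  have hreact : ∀ a b a' b' : ℝ, 0 ≤ a → a ≤ a' → a' ≤ 1 → 0 ≤ b' → b' ≤ b → b ≤ 1 →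
      (a' ^ 3 - a' + Λ * a' * b' ^ 2) - (a ^ 3 - a + Λ * a * b ^ 2) ≤ (3 + Λ) * (a' - a) := by
    intro a b a' b' ha haa ha1 hb hbb hb1
    have e1 : (a' ^ 3 - a' + Λ * a' * b' ^ 2) - (a ^ 3 - a + Λ * a * b ^ 2) =
      (a' - a) * (a' ^ 2 + a * a' + a ^ 2 - 1 + Λ * b' ^ 2) - Λ * a * (b ^ 2 - b' ^ 2) := by ring
    have h1 : b' ^ 2 ≤ b ^ 2 := by gcongr
    have h2 : 0 ≤ Λ * a * (b ^ 2 - b' ^ 2) :=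
      mul_nonneg (by positivity) (by linarith)
    have h3 : a' ^ 2 + a * a' + a ^ 2 - 1 + Λ * b' ^ 2 ≤ 3 + Λ := by
      have : Λ * b' ^ 2 ≤ Λ * 1 := by
        gcongr
        exact pow_le_one₀ hb (hbb.trans hb1)
      nlinarith
    have h4 := mul_le_mul_of_nonneg_left h3 (by linarith : 0 ≤ a' - a)
    rw [e1]
    linarith
  obtain ⟨δ₁, hδ₁, hgap₁⟩ := increment_gap (f := u) (j := j) (K := 3 + Λ) (a := 0) (M₀ := M)
    (by linarith) hCu huc hlipu (fun x hx => by linarith [(hPM x hx).1])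
    (fun x hx => by linarith [(hMM x hx).1]) (τ := τ) (by rw [hτj]; exact hT0) huT
    (fun x => (hlu (x + τ)).translate.sub (hlu x))
    (fun x => hreact _ _ _ _ (hu0 x) (huT x) (hu1 _) (hv0 _) (hvT x) (hv1 x)) M
  obtain ⟨δ₂, hδ₂, hgap₂⟩ := increment_gap (f := fun x => -v x) (j := j) (K := 3 + Λ) (a := -1)
    (M₀ := M) (by linarith) hCv hvc.neg
    (fun x y => by
      have := hlipv x y
      rwa [abs_sub_comm, show v y - v x = -v x - -v y by ring] at this)
    (fun x hx => by linarith [(hPM x hx).2])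
    (fun x hx => by linarith [(hMM x hx).2]) (τ := τ) (by rw [hτj]; exact hT0)
    (fun x => neg_le_neg (hvT x))
    (fun x => (hlv (x + τ)).translate.neg.sub (hlv x).neg)
    (fun x => by
      have := hreact _ _ _ _ (hv0 (x + τ)) (hvT x) (hv1 _) (hu0 x) (huT x) (hu1 _)
      linarith) M
  -- By Lipschitz continuity the order persists for `t` slightly smaller than `T`.
  set d := min (δ₁ / Cu) (δ₂ / Cv) with hd
  have hd0 : 0 < d := by positivity
  obtain ⟨t, htB, htd⟩ := exists_lt_of_lt_csSup ⟨t₀, ht₀B⟩ (show T - d < sSup B by linarith)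
  have htT : t ≤ T := le_csSup hBbdd htB
  have hen : ‖e‖ = 1 := by simp [he]
  have hdist : ∀ x, ‖x + τ - (x + (h + t • e))‖ = T - t := by
    intro x
    rw [show x + τ - (x + (h + t • e)) = (T - t) • e by rw [hτ]; module, norm_smul, hen,
      Real.norm_eq_abs, abs_of_nonneg (by linarith), mul_one]
  refine htB.2 (hslab t fun x hx1 hx2 => ?_)
  rw [hτj] at hx2
  have hxM : |x j| ≤ M := abs_le.2 ⟨hx1.le, by linarith [htB.1]⟩
  have g1 := hgap₁ x hxM
  have g2 := hgap₂ x hxM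
  have l1 := abs_le.1 (hlipu (x + τ) (x + (h + t • e)))
  have l2 := abs_le.1 (hlipv (x + τ) (x + (h + t • e)))
  rw [hdist] at l1 l2
  have m1 : Cu * (T - t) ≤ δ₁ := by
    have : T - t ≤ δ₁ / Cu := by linarith [min_le_left (δ₁ / Cu) (δ₂ / Cv)]
    rwa [le_div_iff₀ hCu, mul_comm] at this
  have m2 : Cv * (T - t) ≤ δ₂ := by
    have : T - t ≤ δ₂ / Cv := by linarith [min_le_right (δ₁ / Cu) (δ₂ / Cv)]
    rwa [le_div_iff₀ hCv, mul_comm] at this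
  constructor
  · linarith [l1.2]
  · linarith [l2.1]

/-! ### One-dimensional profiles -/

/-- One half of the strong maximum principle for `p'' ≤ k² p` on the line. -/
lemma ode_zero_right {p p₁ p₂ : ℝ → ℝ} {k x₀ : ℝ} (hk : 0 < k) (h0 : ∀ s, 0 ≤ p s)
    (hp : ∀ s, HasDerivAt p (p₁ s) s) (hp₁ : ∀ s, HasDerivAt p₁ (p₂ s) s)
    (hle : ∀ s, p₂ s ≤ k ^ 2 * p s) (hx₀ : p x₀ = 0) : ∀ s, x₀ ≤ s → p s = 0 := by
  have hp₁0 : p₁ x₀ = 0 := by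
    refine IsLocalMin.hasDerivAt_eq_zero ?_ (hp x₀)
    exact Eventually.of_forall fun s => by rw [hx₀]; exact h0 s
  -- `exp (-k s) (p' + k p)` is nonincreasing and vanishes at `x₀`.
  have hG : ∀ s, HasDerivAt (fun s => Real.exp (-k * s) * (p₁ s + k * p s))
      (Real.exp (-k * s) * (p₂ s - k ^ 2 * p s)) s := by
    intro s
    have h1 : HasDerivAt (fun s : ℝ => -k * s) (-k) s := by
      simpa using (hasDerivAt_id s).const_mul (-k)
    refine (h1.exp.mul ((hp₁ s).add ((hp s).const_mul k))).congr_deriv ?_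
    simp only [Pi.add_apply]
    ring
  have hanti : Antitone fun s => Real.exp (-k * s) * (p₁ s + k * p s) := by
    refine antitone_of_deriv_nonpos (fun s => (hG s).differentiableAt) fun s => ?_
    rw [(hG s).deriv]
    exact mul_nonpos_of_nonneg_of_nonpos (Real.exp_pos _).le (by linarith [hle s])
  have hp₁neg : ∀ s, x₀ ≤ s → p₁ s ≤ 0 := by
    intro s hs
    have h1 : Real.exp (-k * s) * (p₁ s + k * p s) ≤ Real.exp (-k * x₀) * (p₁ x₀ + k * p x₀) :=
      hanti hs
    rw [hp₁0, hx₀] at h1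
    have h2 : p₁ s + k * p s ≤ 0 := by
      by_contra! hpos
      have := mul_pos (Real.exp_pos (-k * s)) hpos
      linarith
    have := mul_nonneg hk.le (h0 s)
    linarith
  have hpanti : AntitoneOn p (Set.Ici x₀) := by
    refine antitoneOn_of_deriv_nonpos (convex_Ici x₀)
      (fun s _ => (hp s).continuousAt.continuousWithinAt)
      (fun s _ => (hp s).differentiableAt.differentiableWithinAt) fun s hs => ?_
    rw [interior_Ici] at hs
    rw [(hp s).deriv]
    exact hp₁neg s (le_of_lt hs)
  intro s hs
  have := hpanti (Set.self_mem_Ici) (show s ∈ Set.Ici x₀ from hs) hs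
  exact le_antisymm (by linarith) (h0 s)

lemma ode_zero {p p₁ p₂ : ℝ → ℝ} {k x₀ : ℝ} (hk : 0 < k) (h0 : ∀ s, 0 ≤ p s)
    (hp : ∀ s, HasDerivAt p (p₁ s) s) (hp₁ : ∀ s, HasDerivAt p₁ (p₂ s) s)
    (hle : ∀ s, p₂ s ≤ k ^ 2 * p s) (hx₀ : p x₀ = 0) : ∀ s, p s = 0 := by
  intro s
  rcases le_total x₀ s with hs | hs
  · exact ode_zero_right hk h0 hp hp₁ hle hx₀ s hs
  · have := ode_zero_right (p := fun s => p (-s)) (p₁ := fun s => -p₁ (-s))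
      (p₂ := fun s => p₂ (-s)) (x₀ := -x₀) hk (fun s => h0 _)
      (fun s => by
        simpa [Function.comp_def] using HasDerivAt.comp s (hp (-s)) (hasDerivAt_neg s))
      (fun s => by
        simpa [Function.comp_def] using
          (HasDerivAt.comp s (hp₁ (-s)) (hasDerivAt_neg s)).fun_neg)
      (fun s => hle _) (by simpa using hx₀) (-s) (by linarith)
    simpa using this

/-- For a function of the `j`-th coordinate alone, the Laplacian is the second derivative of its
profile. -/
lemma HasLap.hasDerivAt_profile {f : EuclideanSpace ℝ (Fin n) → ℝ} {j : Fin n}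
    (hfd : Differentiable ℝ f)
    (hdep : ∀ x y : EuclideanSpace ℝ (Fin n), x j = y j → f x = f y) {s₀ L : ℝ}
    (hL : HasLap f (s₀ • EuclideanSpace.single j (1 : ℝ)) L) :
    HasDerivAt (fun s : ℝ => fderiv ℝ f (s • EuclideanSpace.single j (1 : ℝ))
      (EuclideanSpace.single j (1 : ℝ))) L s₀ := by
  obtain ⟨a, ha, rfl⟩ := hL
  have hak : ∀ k, k ≠ j → a k = 0 := by
    intro k hk
    have hconst : (fun s : ℝ => f (s₀ • EuclideanSpace.single j (1 : ℝ) +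
        s • EuclideanSpace.single k (1 : ℝ))) = fun _ => f (s₀ • EuclideanSpace.single j (1 : ℝ)) := by
      funext s
      exact hdep _ _ (by simp [hk.symm])
    have := (ha k).deriv_deriv
    rw [hconst] at this
    simpa using this.symm
  rw [Finset.sum_eq_single j (fun k _ hk => hak k hk) (by simp)]
  obtain ⟨g', hg1, hg2⟩ := ha j
  have heq : (fun s : ℝ => fderiv ℝ f ((s₀ + s) • EuclideanSpace.single j (1 : ℝ))
      (EuclideanSpace.single j (1 : ℝ))) =ᶠ[𝓝 0] g' := by
    filter_upwards [hg1] with s hs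
    rw [add_smul]
    exact (hasDerivAt_slice hfd _ _ s).unique hs
  have h1 := hg2.congr_of_eventuallyEq heq
  have h2 := HasDerivAt.comp_sub_const s₀ s₀ (f := fun s : ℝ => fderiv ℝ f
    ((s₀ + s) • EuclideanSpace.single j (1 : ℝ)) (EuclideanSpace.single j (1 : ℝ)))
    (by simpa using h1)
  simpa using h2

lemma fderiv_eq_profile {f : EuclideanSpace ℝ (Fin n) → ℝ} {j : Fin n} (hfd : Differentiable ℝ f)
    (hdep : ∀ x y : EuclideanSpace ℝ (Fin n), x j = y j → f x = f y)
    (x : EuclideanSpace ℝ (Fin n)) :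
    fderiv ℝ f x (EuclideanSpace.single j (1 : ℝ)) =
      fderiv ℝ f (x j • EuclideanSpace.single j (1 : ℝ)) (EuclideanSpace.single j (1 : ℝ)) := by
  have h1 := hasDerivAt_slice hfd x (EuclideanSpace.single j (1 : ℝ)) 0
  have h2 := hasDerivAt_slice hfd (x j • EuclideanSpace.single j (1 : ℝ))
    (EuclideanSpace.single j (1 : ℝ)) 0
  have e : (fun s : ℝ => f (x + s • EuclideanSpace.single j (1 : ℝ))) =
      fun s : ℝ => f (x j • EuclideanSpace.single j (1 : ℝ) + s • EuclideanSpace.single j (1 : ℝ)) := by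
    funext s
    exact hdep _ _ (by simp)
  rw [e] at h1
  have := h1.unique h2
  simpa using this

/-- A nonconstant monotone profile whose derivative `p` satisfies `p'' ≤ k² p` has positive
derivative everywhere. -/
lemma profile_pos {U p p₁ p₂ : ℝ → ℝ} {k : ℝ} (hk : 0 < k) (hU : ∀ s, HasDerivAt U (p s) s)
    (hmono : Monotone U) (hp : ∀ s, HasDerivAt p (p₁ s) s) (hp₁ : ∀ s, HasDerivAt p₁ (p₂ s) s)
    (hle : ∀ s, 0 ≤ p s → p₂ s ≤ k ^ 2 * p s) (hne : ∃ a b, U a ≠ U b) : ∀ s, 0 < p s := by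
  have h0 : ∀ s, 0 ≤ p s := fun s => by
    rw [← (hU s).deriv]
    exact hmono.deriv_nonneg
  intro s
  refine lt_of_le_of_ne (h0 s) fun hs => ?_
  have hz := ode_zero hk h0 hp hp₁ (fun s => hle s (h0 s)) hs.symm
  obtain ⟨a, b, hab⟩ := hne
  refine hab (is_const_of_deriv_eq_zero (fun s => (hU s).differentiableAt) (fun s => ?_) a b)
  rw [(hU s).deriv, hz s]

/-! ### The system -/

/-- Corollary 1.5: the weaker assumption `u - v → ±1` uniformly as
`x_N → ±∞` still yields `(h∞)`, one-dimensional symmetry and monotonicity. -/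
theorem stmt_5 (N : ℕ) (Λ : ℝ) (hΛ : 1 < Λ)
    (u v : EuclideanSpace ℝ (Fin (N + 1)) → ℝ)
    (hsol : IsSolution (N + 1) Λ u v)
    (hu : ∀ x, 0 ≤ u x) (hv : ∀ x, 0 ≤ v x)
    (hlimPlus : ∀ ε : ℝ, 0 < ε → ∃ M : ℝ, ∀ x : EuclideanSpace ℝ (Fin (N + 1)),
      M ≤ x (Fin.last N) → |u x - v x - 1| < ε)
    (hlimMinus : ∀ ε : ℝ, 0 < ε → ∃ M : ℝ, ∀ x : EuclideanSpace ℝ (Fin (N + 1)),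
      x (Fin.last N) ≤ M → |u x - v x - (-1)| < ε) :
    Hinf N u v ∧
    (∀ x y : EuclideanSpace ℝ (Fin (N + 1)),
      x (Fin.last N) = y (Fin.last N) → u x = u y ∧ v x = v y) ∧
    (∀ x : EuclideanSpace ℝ (Fin (N + 1)),
      0 < fderiv ℝ u x (EuclideanSpace.single (Fin.last N) 1) ∧
      fderiv ℝ v x (EuclideanSpace.single (Fin.last N) 1) < 0) := by
  obtain ⟨huC, hvC, hequ, heqv⟩ := hsol
  have hΛ0 : 0 < Λ := by linarith
  have hud : Differentiable ℝ u := huC.differentiable (by norm_num)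
  have hvd : Differentiable ℝ v := hvC.differentiable (by norm_num)
  have hlu : ∀ x, HasLap u x (u x ^ 3 - u x + Λ * u x * v x ^ 2) := by
    intro x
    have := huC.hasLap x
    rwa [show lap (N + 1) u x = u x ^ 3 - u x + Λ * u x * v x ^ 2 by linarith [hequ x]] at this
  have hlv : ∀ x, HasLap v x (v x ^ 3 - v x + Λ * v x * u x ^ 2) := by
    intro x
    have := hvC.hasLap x
    rwa [show lap (N + 1) v x = v x ^ 3 - v x + Λ * v x * u x ^ 2 by linarith [heqv x]] at this
  have hu1 : ∀ x, u x ≤ 1 := le_one_of_lap hud.continuous hu hlu fun x => by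
    have := hu x
    have : 0 ≤ Λ * u x * v x ^ 2 := by positivity
    linarith
  have hv1 : ∀ x, v x ≤ 1 := le_one_of_lap hvd.continuous hv hlv fun x => by
    have := hv x
    have : 0 ≤ Λ * v x * u x ^ 2 := by positivity
    linarith
  have hinf : Hinf N u v := by
    constructor
    · intro ε hε
      obtain ⟨M, hM⟩ := hlimPlus ε hε
      refine ⟨M, fun x hx => ?_⟩
      have h1 := abs_lt.1 (hM x hx)
      have := hu1 x
      have := hv x
      exact ⟨abs_lt.2 ⟨by linarith, by linarith⟩, abs_lt.2 ⟨by linarith, by linarith⟩⟩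
    · intro ε hε
      obtain ⟨M, hM⟩ := hlimMinus ε hε
      refine ⟨M, fun x hx => ?_⟩
      have h1 := abs_lt.1 (hM x hx)
      have := hv1 x
      have := hu x
      exact ⟨abs_lt.2 ⟨by linarith, by linarith⟩, abs_lt.2 ⟨by linarith, by linarith⟩⟩
  have hslide := slide hΛ (Fin.last N) hud hvd hu hu1 hv hv1 hlu hlv
    (fun ε hε => by
      obtain ⟨M, hM⟩ := hinf.1 ε hε
      exact ⟨M, fun x hx => ⟨by linarith [(abs_lt.1 (hM x hx).1).1], (abs_lt.1 (hM x hx).2).2.le⟩⟩)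
    (fun ε hε => by
      obtain ⟨M, hM⟩ := hinf.2 ε hε
      exact ⟨M, fun x hx => ⟨(abs_lt.1 (hM x hx).1).2.le, by linarith [(abs_lt.1 (hM x hx).2).1]⟩⟩)
  set e : EuclideanSpace ℝ (Fin (N + 1)) := EuclideanSpace.single (Fin.last N) (1 : ℝ) with he
  -- Letting the last component of the translation tend to `0⁺`.
  have hhor : ∀ x h : EuclideanSpace ℝ (Fin (N + 1)), h (Fin.last N) = 0 →
      u x ≤ u (x + h) ∧ v (x + h) ≤ v x := by
    intro x h hh
    have h1 := order_closed hud.continuous h e (T := 0) (fun t ht x => (hslide h hh t ht x).1) x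
    have h2 := order_closed (u := fun x => -v x) hvd.continuous.neg h e (T := 0)
      (fun t ht x => neg_le_neg (hslide h hh t ht x).2) x
    simp only [zero_smul, add_zero] at h1 h2
    exact ⟨h1, by linarith⟩
  have hdep : ∀ x y : EuclideanSpace ℝ (Fin (N + 1)),
      x (Fin.last N) = y (Fin.last N) → u x = u y ∧ v x = v y := by
    intro x y hxy
    have h1 := hhor x (y - x) (by simp [hxy])
    have h2 := hhor y (x - y) (by simp [hxy])
    rw [add_sub_cancel] at h1 h2
    exact ⟨le_antisymm h1.1 h2.1, le_antisymm h2.2 h1.2⟩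
  have hdepu := fun x y hxy => (hdep x y hxy).1
  have hdepv := fun x y hxy => (hdep x y hxy).2
  have hmono : ∀ s t : ℝ, s ≤ t → u (s • e) ≤ u (t • e) ∧ v (t • e) ≤ v (s • e) := by
    intro s t hst
    rcases hst.eq_or_lt with rfl | hlt
    · exact ⟨le_rfl, le_rfl⟩
    · have := hslide 0 (by simp) (t - s) (by linarith) (s • e)
      rwa [show s • e + (0 + (t - s) • e) = t • e by module] at this
  have hU : ∀ s : ℝ, HasDerivAt (fun s : ℝ => u (s • e)) (fderiv ℝ u (s • e) e) s := by
    intro s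
    simpa using hasDerivAt_slice hud 0 e s
  have hV : ∀ s : ℝ, HasDerivAt (fun s : ℝ => v (s • e)) (fderiv ℝ v (s • e) e) s := by
    intro s
    simpa using hasDerivAt_slice hvd 0 e s
  have hU' : ∀ s : ℝ, HasDerivAt (fun s : ℝ => fderiv ℝ u (s • e) e) _ s :=
    fun s => (hlu (s • e)).hasDerivAt_profile hud hdepu
  have hV' : ∀ s : ℝ, HasDerivAt (fun s : ℝ => fderiv ℝ v (s • e) e) _ s :=
    fun s => (hlv (s • e)).hasDerivAt_profile hvd hdepv
  have hmonoU : Monotone fun s : ℝ => u (s • e) := fun s t hst => (hmono s t hst).1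
  have hmonoV : Monotone fun s : ℝ => -v (s • e) := fun s t hst => neg_le_neg (hmono s t hst).2
  have hU0 : ∀ s : ℝ, 0 ≤ fderiv ℝ u (s • e) e := fun s => by
    rw [← (hU s).deriv]
    exact hmonoU.deriv_nonneg
  have hV0 : ∀ s : ℝ, 0 ≤ -fderiv ℝ v (s • e) e := fun s => by
    rw [← (hV s).fun_neg.deriv]
    exact hmonoV.deriv_nonneg
  obtain ⟨M₁, hM₁⟩ := hinf.1 (1 / 4) (by norm_num)
  obtain ⟨M₂, hM₂⟩ := hinf.2 (1 / 4) (by norm_num)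
  have hr := hM₁ (M₁ • e) (by simp [he])
  have hl := hM₂ (M₂ • e) (by simp [he])
  rw [abs_lt, abs_lt] at hr hl
  have hsq : ∀ a b : ℝ, 0 ≤ a → a ≤ 1 → 0 ≤ b → b ≤ 1 → 3 * a ^ 2 - 1 + Λ * b ^ 2 ≤ (3 + Λ) ^ 2 := by
    intro a b ha0 ha1 hb0 hb1
    have h1 : a ^ 2 ≤ 1 := pow_le_one₀ ha0 ha1
    have h2 : Λ * b ^ 2 ≤ Λ * 1 := by
      gcongr
      exact pow_le_one₀ hb0 hb1
    nlinarith
  have hposU : ∀ s : ℝ, 0 < fderiv ℝ u (s • e) e := by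
    refine profile_pos (k := 3 + Λ) (by linarith) hU hmonoU hU'
      (fun s => (((hU s).fun_pow 3).fun_sub (hU s)).fun_add
        (((hU s).const_mul Λ).fun_mul ((hV s).fun_pow 2)))
      (fun s hs => ?_) ⟨M₁, M₂, fun h => by linarith [hr.1.1, hl.1.2]⟩
    have h1 := mul_le_mul_of_nonneg_right
      (hsq _ _ (hu (s • e)) (hu1 _) (hv (s • e)) (hv1 _)) hs
    have h2 : 0 ≤ Λ * (u (s • e) * v (s • e)) * -fderiv ℝ v (s • e) e :=
      mul_nonneg (mul_nonneg hΛ0.le (mul_nonneg (hu _) (hv _))) (hV0 s)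
    norm_num
    linarith
  have hposV : ∀ s : ℝ, 0 < -fderiv ℝ v (s • e) e := by
    refine profile_pos (k := 3 + Λ) (by linarith) (fun s => (hV s).fun_neg) hmonoV
      (fun s => (hV' s).fun_neg)
      (fun s => ((((hV s).fun_pow 3).fun_sub (hV s)).fun_add
        (((hV s).const_mul Λ).fun_mul ((hU s).fun_pow 2))).fun_neg)
      (fun s hs => ?_) ⟨M₁, M₂, fun h => by linarith [hr.2.2, hl.2.1]⟩
    have h1 := mul_le_mul_of_nonneg_right
      (hsq _ _ (hv (s • e)) (hv1 _) (hu (s • e)) (hu1 _)) hs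
    have h2 : 0 ≤ Λ * (u (s • e) * v (s • e)) * fderiv ℝ u (s • e) e :=
      mul_nonneg (mul_nonneg hΛ0.le (mul_nonneg (hu _) (hv _))) (hU0 s)
    norm_num
    linarith
  refine ⟨hinf, hdep, fun x => ⟨?_, ?_⟩⟩
  · rw [fderiv_eq_profile hud hdepu x]
    exact hposU _
  · rw [fderiv_eq_profile hvd hdepv x]
    linarith [hposV (x (Fin.last N))]
end
end

section
/- Let N ≥ 1 and 0 < Λ < 1, and let (u, v) be a classical solution of the system (P_Λ) with u > 0 and v > 0 at every point of ℝ^N. Then u and v are the constants u ≡ v ≡ 1/√(1 + Λ). -/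
/-!
The proof is a comparison argument in which the extremal values of `u²` and `v²` are played
against each other. Two one-sided estimates for a positive `C²` function `w` on `ℝ^N` carry it:

* `sq_le_of_lap_ge`: if `Δw ≥ w (w² - m)` with `m ≥ 0`, then `w² ≤ m` (a Keller–Osserman bound,
  so no boundedness of `w` is assumed);
* `le_sq_of_lap_le`: if `Δw ≤ w (w² - m)`, then `m ≤ w²`.

Both use the weight `t(x) = 1 - q |x - c|²`, which is positive on a ball about `c` whose radius
tends to infinity as `q → 0`. For the upper bound, `w t` is maximised over that ball; for the lower
bound, `t² / w` is maximised, so that a multiple of `t²` touches `w` from below. The first and second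
order conditions at the touching point give the claim at `c` up to an error `O(q)`.

For a positive solution, the upper bound first gives `u², v² ≤ 1`. With `C = inf v²`, the
first equation and the upper bound give `u² ≤ 1 - Λ C`; the second equation and the
lower bound then give `v² ≥ 1 - Λ (1 - Λ C)`. Hence `C ≥ 1 - Λ + Λ² C`, that is
`C ≥ 1 / (1 + Λ)`, and therefore `u² ≤ 1 - Λ C ≤ 1 / (1 + Λ)`. Exchanging `u` and `v` gives the
reverse inequalities.
-/


open scoped RealInnerProductSpace
open Filter

noncomputable section

/-- Second order necessary condition at a local minimum in one variable. -/
lemma second_order_min {g g1 : ℝ → ℝ} {g2 : ℝ} (h1 : ∀ s, HasDerivAt g (g1 s) s)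
    (h2 : HasDerivAt g1 g2 0) (hmin : IsLocalMin g 0) : g1 0 = 0 ∧ 0 ≤ g2 := by
  have hd : deriv g = g1 := funext fun s => (h1 s).deriv
  have h0 : g1 0 = 0 := hmin.hasDerivAt_eq_zero (h1 0)
  refine ⟨h0, ?_⟩
  by_contra hneg
  push Not at hneg
  -- If `g'' < 0`, the point is also a local maximum, so `g` is locally constant and `g'' = 0`.
  have hmax : IsLocalMax g 0 := by
    apply isLocalMax_of_deriv_deriv_neg
    · rw [hd, h2.deriv]; exact hneg
    · rw [hd]; exact h0
    · exact (h1 0).continuousAt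
  have hc : g =ᶠ[nhds 0] fun _ => g 0 := by
    filter_upwards [hmin, hmax] with s a b
    exact le_antisymm b a
  have h3 := hc.deriv
  rw [hd] at h3
  have h4 := h3.deriv_eq
  rw [h2.deriv] at h4
  simp at h4
  linarith

/-- The quadratic weight `1 - q |x - c|²`, positive exactly on a ball about `c` when `q > 0`. -/
def wt {N : ℕ} (q : ℝ) (c x : EuclideanSpace ℝ (Fin N)) : ℝ := 1 - q * ‖x - c‖ ^ 2

section Calculus

variable {N : ℕ}

lemma wt_continuous (q : ℝ) (c : EuclideanSpace ℝ (Fin N)) : Continuous (wt q c) := by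
  unfold wt; fun_prop

lemma wt_le_one {q : ℝ} (hq : 0 < q) (c x : EuclideanSpace ℝ (Fin N)) : wt q c x ≤ 1 := by
  unfold wt
  have : 0 ≤ q * ‖x - c‖ ^ 2 := by positivity
  linarith

lemma wt_self (q : ℝ) (c : EuclideanSpace ℝ (Fin N)) : wt q c c = 1 := by
  simp [wt]

lemma wt_compact {q : ℝ} (hq : 0 < q) (c : EuclideanSpace ℝ (Fin N)) :
    IsCompact {x | 0 ≤ wt q c x} := by
  refine (isCompact_closedBall c (Real.sqrt (1 / q))).of_isClosed_subset
    (isClosed_le continuous_const (wt_continuous q c)) ?_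
  intro x hx
  simp only [Set.mem_ofPred_eq, wt] at hx
  rw [mem_closedBall_iff_norm]
  apply Real.le_sqrt_of_sq_le
  rw [le_div_iff₀ hq]
  linarith

lemma wt_line (q : ℝ) (c x : EuclideanSpace ℝ (Fin N)) (i : Fin N) (s : ℝ) :
    wt q c (x + s • EuclideanSpace.single i (1 : ℝ))
      = wt q c x - 2 * q * s * (x - c) i - q * s ^ 2 := by
  have h : ‖x + s • EuclideanSpace.single i (1 : ℝ) - c‖ ^ 2
      = ‖x - c‖ ^ 2 + 2 * s * (x - c) i + s ^ 2 := by
    have : x + s • EuclideanSpace.single i (1 : ℝ) - c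
        = (x - c) + s • EuclideanSpace.single i (1 : ℝ) := by abel
    rw [this, norm_add_sq_real, inner_smul_right, EuclideanSpace.inner_single_right, norm_smul]
    simp
    ring
  unfold wt
  rw [h]; ring

lemma wt_line_hasDerivAt (q : ℝ) (c x : EuclideanSpace ℝ (Fin N)) (i : Fin N) (s : ℝ) :
    HasDerivAt (fun s : ℝ => wt q c (x + s • EuclideanSpace.single i (1 : ℝ)))
      (-(2 * q * (x - c) i) - 2 * q * s) s := by
  simp_rw [wt_line]
  have h := ((((hasDerivAt_id s).const_mul (2 * q)).mul_const ((x - c) i)).const_sub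
    (wt q c x)).sub (((hasDerivAt_id s).pow 2).const_mul q)
  refine HasDerivAt.congr_deriv (f := fun s : ℝ => _) h ?_
  simp; ring

lemma line_hasDerivAt {u : EuclideanSpace ℝ (Fin N) → ℝ} (hu : Differentiable ℝ u)
    (x e : EuclideanSpace ℝ (Fin N)) (s : ℝ) :
    HasDerivAt (fun s : ℝ => u (x + s • e)) (fderiv ℝ u (x + s • e) e) s := by
  have hl : HasDerivAt (fun s : ℝ => x + s • e) e s := by
    simpa using ((hasDerivAt_id s).smul_const e).const_add x
  exact (hu (x + s • e)).hasFDerivAt.comp_hasDerivAt s hl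

lemma line_hasDerivAt₂ {u : EuclideanSpace ℝ (Fin N) → ℝ} (hu : ContDiff ℝ 2 u)
    (x e : EuclideanSpace ℝ (Fin N)) :
    HasDerivAt (fun s : ℝ => fderiv ℝ u (x + s • e) e)
      (fderiv ℝ (fun y => fderiv ℝ u y e) x e) 0 := by
  have hd : Differentiable ℝ (fun y => fderiv ℝ u y e) := by
    have h1 : ContDiff ℝ 1 (fderiv ℝ u) := hu.fderiv_right (by norm_num)
    exact (h1.clm_apply contDiff_const).differentiable (by norm_num)
  simpa using line_hasDerivAt hd x e 0

lemma line_tendsto (x e : EuclideanSpace ℝ (Fin N)) :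
    Tendsto (fun s : ℝ => x + s • e) (nhds 0) (nhds x) := by
  have : Continuous (fun s : ℝ => x + s • e) := by fun_prop
  simpa using this.tendsto 0

lemma sum_coord_sq (y : EuclideanSpace ℝ (Fin N)) : ∑ i, y i ^ 2 = ‖y‖ ^ 2 := by
  rw [EuclideanSpace.norm_sq_eq]; simp

/-- Where `w t` has a local maximum, the vanishing of its gradient and the sign of its Laplacian
combine into this estimate, which contains no gradient of `w`. -/
lemma lap_at_max {w : EuclideanSpace ℝ (Fin N) → ℝ} (hw : ContDiff ℝ 2 w) (q : ℝ)
    (c x : EuclideanSpace ℝ (Fin N)) (ht : 0 < wt q c x)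
    (hmax : IsLocalMax (fun y => w y * wt q c y) x) :
    lap N w x * wt q c x ^ 2
      ≤ w x * (8 * q ^ 2 * ‖x - c‖ ^ 2 + 2 * N * q * wt q c x) := by
  have key : ∀ i : Fin N,
      fderiv ℝ (fun y => fderiv ℝ w y (EuclideanSpace.single i 1)) x (EuclideanSpace.single i 1)
        * wt q c x ^ 2 ≤ w x * (8 * q ^ 2 * (x - c) i ^ 2 + 2 * q * wt q c x) := by
    intro i
    set e : EuclideanSpace ℝ (Fin N) := EuclideanSpace.single i 1 with he
    have hf := line_hasDerivAt (hw.differentiable (by norm_num)) x e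
    have hf2 := line_hasDerivAt₂ hw x e
    have hp := wt_line_hasDerivAt q c x i
    rw [← he] at hp
    have hp2 : HasDerivAt (fun s : ℝ => -(2 * q * (x - c) i) - 2 * q * s) (-(2 * q)) 0 := by
      simpa using ((hasDerivAt_id (0 : ℝ)).const_mul (2 * q)).const_sub (-(2 * q * (x - c) i))
    have h := second_order_min (fun s => ((hf s).mul (hp s)).neg)
      (((hf2.mul (hp 0)).add ((hf 0).mul hp2)).neg) (by
        have := (line_tendsto x e).eventually hmax
        have h' : ∀ᶠ s : ℝ in nhds 0, -(w (x + (0:ℝ) • e) * wt q c (x + (0:ℝ) • e))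
            ≤ -(w (x + s • e) * wt q c (x + s • e)) := by
          filter_upwards [this] with s hs
          simpa using hs
        exact h')
    obtain ⟨h1, h2⟩ := h
    simp only [zero_smul, add_zero, mul_zero, sub_zero] at h1 h2
    set f2 := fderiv ℝ (fun y => fderiv ℝ w y e) x e
    set f1 := fderiv ℝ w x e
    set t := wt q c x
    set a := (x - c) i
    have h1' : f1 * t = w x * (2 * q * a) := by linarith
    have h3 := mul_nonneg h2 ht.le
    have h4 : f1 * (2 * q * a) * t = w x * (2 * q * a) ^ 2 := by
      calc f1 * (2 * q * a) * t = (f1 * t) * (2 * q * a) := by ring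
        _ = _ := by rw [h1']; ring
    nlinarith
  have hs := Finset.sum_le_sum fun i (_ : i ∈ Finset.univ) => key i
  rw [← Finset.sum_mul, ← Finset.mul_sum, Finset.sum_add_distrib, ← Finset.mul_sum,
    sum_coord_sq] at hs
  simp only [Finset.sum_const, Finset.card_univ, Fintype.card_fin, nsmul_eq_mul] at hs
  unfold lap
  refine hs.trans (le_of_eq ?_)
  ring

/-- Where `k t²` touches `w` from below, `Δw ≥ k Δ(t²)`. -/
lemma lap_at_min {w : EuclideanSpace ℝ (Fin N) → ℝ} (hw : ContDiff ℝ 2 w) (q k : ℝ)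
    (c x : EuclideanSpace ℝ (Fin N))
    (hmin : IsLocalMin (fun y => w y - k * (wt q c y * wt q c y)) x) :
    k * (8 * q ^ 2 * ‖x - c‖ ^ 2 - 4 * N * q * wt q c x) ≤ lap N w x := by
  have key : ∀ i : Fin N, k * (8 * q ^ 2 * (x - c) i ^ 2 - 4 * q * wt q c x) ≤
      fderiv ℝ (fun y => fderiv ℝ w y (EuclideanSpace.single i 1)) x
        (EuclideanSpace.single i 1) := by
    intro i
    set e : EuclideanSpace ℝ (Fin N) := EuclideanSpace.single i 1 with he
    have hf := line_hasDerivAt (hw.differentiable (by norm_num)) x e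
    have hf2 := line_hasDerivAt₂ hw x e
    have hp := wt_line_hasDerivAt q c x i
    rw [← he] at hp
    have hp2 : HasDerivAt (fun s : ℝ => -(2 * q * (x - c) i) - 2 * q * s) (-(2 * q)) 0 := by
      simpa using ((hasDerivAt_id (0 : ℝ)).const_mul (2 * q)).const_sub (-(2 * q * (x - c) i))
    have h := second_order_min (fun s => (hf s).sub (((hp s).mul (hp s)).const_mul k))
      (hf2.sub (((hp2.mul (hp 0)).add ((hp 0).mul hp2)).const_mul k)) (by
        have := (line_tendsto x e).eventually hmin
        have h' : ∀ᶠ s : ℝ in nhds 0, w (x + (0:ℝ) • e)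
              - k * (wt q c (x + (0:ℝ) • e) * wt q c (x + (0:ℝ) • e))
            ≤ w (x + s • e) - k * (wt q c (x + s • e) * wt q c (x + s • e)) := by
          filter_upwards [this] with s hs
          simpa using hs
        exact h')
    obtain ⟨-, h2⟩ := h
    simp only [zero_smul, add_zero, mul_zero, sub_zero] at h2
    nlinarith
  have hs := Finset.sum_le_sum fun i (_ : i ∈ Finset.univ) => key i
  rw [← Finset.mul_sum, Finset.sum_sub_distrib, ← Finset.mul_sum, sum_coord_sq] at hs
  simp only [Finset.sum_const, Finset.card_univ, Fintype.card_fin, nsmul_eq_mul] at hs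
  unfold lap
  refine (le_of_eq ?_).trans hs
  ring

/-- Keller–Osserman upper bound. -/
lemma sq_le_of_lap_ge {w : EuclideanSpace ℝ (Fin N) → ℝ} (hw : ContDiff ℝ 2 w)
    (hpos : ∀ x, 0 < w x) {m : ℝ} (hm : 0 ≤ m)
    (hlap : ∀ x, w x * (w x ^ 2 - m) ≤ lap N w x) (c : EuclideanSpace ℝ (Fin N)) :
    w c ^ 2 ≤ m := by
  refine le_of_forall_pos_le_add fun ε hε => ?_
  obtain ⟨q, hq, hqε⟩ : ∃ q : ℝ, 0 < q ∧ (8 + 2 * N) * q = ε :=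
    ⟨ε / (8 + 2 * N), by positivity, by field_simp⟩
  obtain ⟨x, hx, hmax⟩ := (wt_compact hq c).exists_isMaxOn ⟨c, by simp [wt_self]⟩
    ((hw.continuous.mul (wt_continuous q c)).continuousOn)
  have hcx : w c ≤ w x * wt q c x := by
    simpa [wt_self] using hmax (show c ∈ {x | 0 ≤ wt q c x} by simp [wt_self])
  have ht : 0 < wt q c x := pos_of_mul_pos_right ((hpos c).trans_le hcx) (hpos x).le
  have hnhds : {x | 0 ≤ wt q c x} ∈ nhds x :=
    mem_of_superset ((isOpen_lt continuous_const (wt_continuous q c)).mem_nhds ht)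
      fun y (hy : 0 < wt q c y) => hy.le
  have h := lap_at_max hw q c x ht (hmax.isLocalMax hnhds)
  have h2 := mul_le_mul_of_nonneg_right (hlap x) (sq_nonneg (wt q c x))
  have h3 : w x * ((w x ^ 2 - m) * wt q c x ^ 2)
      ≤ w x * (8 * q ^ 2 * ‖x - c‖ ^ 2 + 2 * N * q * wt q c x) := by linarith
  have h4 := le_of_mul_le_mul_left h3 (hpos x)
  have ht1 := wt_le_one hq c x
  have h5 : q * ‖x - c‖ ^ 2 = 1 - wt q c x := by unfold wt; ring
  set t := wt q c x
  have h6 : 8 * q ^ 2 * ‖x - c‖ ^ 2 = 8 * q * (1 - t) := by rw [← h5]; ring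
  have h7 : 8 * q * (1 - t) ≤ 8 * q := by nlinarith
  have h8 : 2 * N * q * t ≤ 2 * N * q := mul_le_of_le_one_right (by positivity) ht1
  have h9 : m * t ^ 2 ≤ m := mul_le_of_le_one_right hm (pow_le_one₀ ht.le ht1)
  have h10 : w c ^ 2 ≤ (w x * t) ^ 2 := pow_le_pow_left₀ (hpos c).le hcx 2
  nlinarith

lemma le_sq_of_lap_le {w : EuclideanSpace ℝ (Fin N) → ℝ} (hw : ContDiff ℝ 2 w)
    (hpos : ∀ x, 0 < w x) {m : ℝ}
    (hlap : ∀ x, lap N w x ≤ w x * (w x ^ 2 - m)) (c : EuclideanSpace ℝ (Fin N)) :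
    m ≤ w c ^ 2 := by
  refine le_of_forall_pos_le_add fun ε hε => ?_
  -- The constant makes `(4 N + 8) t - 8 ≤ C t²` hold for all `t`, by the discriminant.
  obtain ⟨q, hq, hqε⟩ : ∃ q : ℝ, 0 < q ∧ (4 * N + 8) ^ 2 / 32 * q = ε :=
    ⟨ε / ((4 * N + 8) ^ 2 / 32), by positivity, by field_simp⟩
  obtain ⟨x, hx, hmax⟩ := (wt_compact hq c).exists_isMaxOn
    (f := fun y => wt q c y * wt q c y / w y) ⟨c, by simp [wt_self]⟩
    ((((wt_continuous q c).mul (wt_continuous q c)).div hw.continuous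
      fun y => (hpos y).ne').continuousOn)
  have hcx : 1 / w c ≤ wt q c x * wt q c x / w x := by
    simpa [wt_self] using hmax (show c ∈ {x | 0 ≤ wt q c x} by simp [wt_self])
  have hK : 0 < wt q c x * wt q c x / w x := (one_div_pos.2 (hpos c)).trans_le hcx
  have ht : 0 < wt q c x := by
    refine lt_of_le_of_ne hx fun h => ?_
    rw [← h] at hK
    simp at hK
  have hnhds : {x | 0 ≤ wt q c x} ∈ nhds x :=
    mem_of_superset ((isOpen_lt continuous_const (wt_continuous q c)).mem_nhds ht)
      fun y (hy : 0 < wt q c y) => hy.le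
  have hwx := hpos x
  obtain ⟨k, hkdef⟩ : ∃ k, k = w x / (wt q c x * wt q c x) := ⟨_, rfl⟩
  have hk : 0 < k := by rw [hkdef]; positivity
  have hkx : w x = k * (wt q c x * wt q c x) := by rw [hkdef]; field_simp
  have hkc : k ≤ w c := by
    rw [div_le_div_iff₀ (hpos c) hwx] at hcx
    rw [hkdef, div_le_iff₀ (by positivity)]
    linarith
  have hmin : IsLocalMin (fun y => w y - k * (wt q c y * wt q c y)) x := by
    filter_upwards [hnhds] with y hy
    have h1 : wt q c y * wt q c y / w y ≤ wt q c x * wt q c x / w x := hmax hy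
    rw [div_le_div_iff₀ (hpos y) hwx] at h1
    have h2 : k * (wt q c y * wt q c y) ≤ w y := by
      rw [hkdef, div_mul_eq_mul_div, div_le_iff₀ (by positivity)]
      linarith
    linarith
  have h := (lap_at_min hw q k c x hmin).trans (hlap x)
  have ht1 := wt_le_one hq c x
  have h5 : q * ‖x - c‖ ^ 2 = 1 - wt q c x := by unfold wt; ring
  have hwc : w x ≤ w c := by
    rw [hkx]
    exact (mul_le_of_le_one_right hk.le (by nlinarith)).trans hkc
  have hsq : w x ^ 2 ≤ w c ^ 2 := pow_le_pow_left₀ hwx.le hwc 2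
  set t := wt q c x
  have h6 : 8 * q ^ 2 * ‖x - c‖ ^ 2 = 8 * q * (1 - t) := by rw [← h5]; ring
  have h7 : k * (8 * q ^ 2 * ‖x - c‖ ^ 2 - 4 * N * q * t) ≤ k * ((t * t) * (w x ^ 2 - m)) := by
    calc _ ≤ w x * (w x ^ 2 - m) := h
      _ = k * (t * t) * (w x ^ 2 - m) := by rw [← hkx]
      _ = _ := by ring
  have h8 := le_of_mul_le_mul_left h7 hk
  rw [h6] at h8
  have h9 : q * ((4 * N + 8) * t - 8) ≤ q * ((4 * N + 8) ^ 2 / 32 * (t * t)) := by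
    apply mul_le_mul_of_nonneg_left _ hq.le
    nlinarith [sq_nonneg ((4 * N + 8) * t - 16)]
  have h10 : (t * t) * (m - w x ^ 2) ≤ (t * t) * ε := by rw [← hqε]; linarith
  have h11 := le_of_mul_le_mul_left h10 (by positivity)
  linarith

end Calculus

/-- Half of the conclusion; the other half is this one with `u` and `v` exchanged. -/
lemma solution_bounds {N : ℕ} {Λ : ℝ} (hΛ₀ : 0 < Λ) (hΛ₁ : Λ < 1)
    {u v : EuclideanSpace ℝ (Fin N) → ℝ} (hsol : IsSolution N Λ u v)
    (hu : ∀ x, 0 < u x) (hv : ∀ x, 0 < v x) (x : EuclideanSpace ℝ (Fin N)) :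
    u x ^ 2 ≤ 1 / (1 + Λ) ∧ 1 / (1 + Λ) ≤ v x ^ 2 := by
  obtain ⟨hu2, hv2, eu, ev⟩ := hsol
  have hv1 : ∀ y, v y ^ 2 ≤ 1 := sq_le_of_lap_ge hv2 hv zero_le_one fun y => by
    have : 0 ≤ Λ * u y ^ 2 * v y := by have := hv y; positivity
    linarith [ev y]
  obtain ⟨C, hCdef⟩ : ∃ C, C = ⨅ y, v y ^ 2 := ⟨_, rfl⟩
  have hC : ∀ y, C ≤ v y ^ 2 := fun y => by
    rw [hCdef]
    exact ciInf_le ⟨0, by rintro _ ⟨z, rfl⟩; positivity⟩ y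
  have hC1 : C ≤ 1 := (hC x).trans (hv1 x)
  have hub : ∀ y, u y ^ 2 ≤ 1 - Λ * C := by
    refine sq_le_of_lap_ge hu2 hu (by nlinarith) fun y => ?_
    have : Λ * u y * C ≤ Λ * u y * v y ^ 2 :=
      mul_le_mul_of_nonneg_left (hC y) (mul_pos hΛ₀ (hu y)).le
    linarith [eu y]
  have hvb : ∀ y, 1 - Λ * (1 - Λ * C) ≤ v y ^ 2 := by
    refine le_sq_of_lap_le hv2 hv fun y => ?_
    have : Λ * v y * u y ^ 2 ≤ Λ * v y * (1 - Λ * C) :=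
      mul_le_mul_of_nonneg_left (hub y) (mul_pos hΛ₀ (hv y)).le
    linarith [ev y]
  have hCC : 1 - Λ * (1 - Λ * C) ≤ C := by
    conv_rhs => rw [hCdef]
    exact le_ciInf hvb
  have hfin : 1 / (1 + Λ) ≤ C := by
    rw [div_le_iff₀ (by linarith)]
    have : 0 ≤ (1 - Λ) * (C * (1 + Λ) - 1) := by linarith
    linarith [nonneg_of_mul_nonneg_right this (by linarith : 0 < 1 - Λ)]
  refine ⟨(hub x).trans ?_, hfin.trans (hC x)⟩
  have h1 : Λ * (1 / (1 + Λ)) ≤ Λ * C := mul_le_mul_of_nonneg_left hfin hΛ₀.le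
  have h2 : 1 - Λ * (1 / (1 + Λ)) = 1 / (1 + Λ) := by
    have : 1 + Λ ≠ 0 := by linarith
    field_simp; ring
  linarith

/-- Theorem 1.6: Liouville theorem for `0 < Λ < 1`: positive
solutions are the constant `1/√(1+Λ)`. -/
theorem stmt_6 (N : ℕ) (Λ : ℝ) (hΛ₀ : 0 < Λ) (hΛ₁ : Λ < 1)
    (u v : EuclideanSpace ℝ (Fin (N + 1)) → ℝ)
    (hsol : IsSolution (N + 1) Λ u v)
    (hu : ∀ x, 0 < u x) (hv : ∀ x, 0 < v x) :
    ∀ x, u x = 1 / Real.sqrt (1 + Λ) ∧ v x = 1 / Real.sqrt (1 + Λ) := by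
  have hswap : IsSolution (N + 1) Λ v u := by
    obtain ⟨h1, h2, h3, h4⟩ := hsol
    exact ⟨h2, h1, fun x => by rw [h4 x]; ring, fun x => by rw [h3 x]; ring⟩
  intro x
  obtain ⟨a, b⟩ := solution_bounds hΛ₀ hΛ₁ hsol hu hv x
  obtain ⟨c, d⟩ := solution_bounds hΛ₀ hΛ₁ hswap hv hu x
  have hs : ∀ z : ℝ, 0 < z → z ^ 2 = 1 / (1 + Λ) → z = 1 / Real.sqrt (1 + Λ) := by
    intro z hz h
    rw [← Real.sqrt_one, ← Real.sqrt_div zero_le_one, Real.sqrt_one, ← h, Real.sqrt_sq hz.le]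
  exact ⟨hs _ (hu x) (le_antisymm a d), hs _ (hv x) (le_antisymm c b)⟩
end
end

section
/- Let N ≤ 2 (N ≥ 1), and let (u, v) be a classical solution of the system (P_Λ) with Λ = 1 and u > 0, v > 0 at every point of ℝ^N. Then u and v are constant functions, and these constants satisfy u² + v² = 1. -/
/-!
Write `ρ = u² + v²`. Since `Δρ ≥ 2ρ(ρ - 1)`, comparison on large balls with barriers blowing up at
the boundary (Keller–Osserman, `sq_add_sq_le_one`) gives `ρ ≤ 1` everywhere, with no a priori
growth assumption. Hence `Δu = -u(1 - ρ) ≤ 0`, and likewise for `v`: both are positive and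
superharmonic. In dimension at most two such a function is constant, by comparison with
`log |x - p|² - |x - p|⁻²` outside small balls around `p` (`le_of_superharmonic`). Once `u` is
constant, `0 = Δu = -u(1 - ρ)` gives `ρ = 1`. Both comparisons rest on the second derivative test
for a function plus a radial barrier (`lap_add_radial_nonneg`).
-/

open scoped RealInnerProductSpace
open Filter

noncomputable section

open scoped Topology

/-! ### Second-order conditions with a radial barrier -/

/-- Second derivative test: at a local minimum the second derivative is nonnegative. -/
lemma second_deriv_nonneg_of_isLocalMin {φ φ' : ℝ → ℝ} {a t : ℝ}
    (h1 : ∀ᶠ s in 𝓝 t, HasDerivAt φ (φ' s) s) (h2 : HasDerivAt φ' a t)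
    (hmin : IsLocalMin φ t) : 0 ≤ a := by
  by_contra! ha
  have hd : deriv φ =ᶠ[𝓝 t] φ' := h1.mono fun s hs => hs.deriv
  have hdd : deriv (deriv φ) t = a := by rw [hd.deriv_eq, h2.deriv]
  have hmax : IsLocalMax φ t :=
    isLocalMax_of_deriv_deriv_neg (by rw [hdd]; exact ha) hmin.deriv_eq_zero
      h1.self_of_nhds.continuousAt
  -- A point that is both a local maximum and a local minimum has `φ` constant around it.
  have hc : φ =ᶠ[𝓝 t] fun _ => φ t := by
    filter_upwards [hmin, hmax] with s hs hs'
    exact le_antisymm hs' hs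
  have h0 : deriv φ =ᶠ[𝓝 t] fun _ => (0 : ℝ) := by
    refine hc.eventuallyEq_nhds.mono fun s hs => ?_
    rw [hs.deriv_eq]; simp
  have : deriv (deriv φ) t = 0 := by rw [h0.deriv_eq]; simp
  linarith

lemma hasDerivAt_line {E : Type*} [NormedAddCommGroup E] [NormedSpace ℝ E] {f : E → ℝ}
    {x e : E} {t : ℝ} (hf : DifferentiableAt ℝ f (x + t • e)) :
    HasDerivAt (fun s : ℝ => f (x + s • e)) (fderiv ℝ f (x + t • e) e) t := by
  have hl : HasDerivAt (fun s : ℝ => x + s • e) e t := by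
    simpa using ((hasDerivAt_id t).smul_const e).const_add x
  exact hf.hasFDerivAt.comp_hasDerivAt t hl

lemma differentiable_fderiv_apply {E : Type*} [NormedAddCommGroup E] [NormedSpace ℝ E]
    {f : E → ℝ} (hf : ContDiff ℝ 2 f) (e : E) :
    Differentiable ℝ (fun y => fderiv ℝ f y e) := by
  have h : ContDiff ℝ 1 (fderiv ℝ f) := hf.fderiv_right (by norm_num)
  exact (h.differentiable (by norm_num)).clm_apply (differentiable_const e)

/-- Maximum principle for radial barriers: at a local minimum of `f + g(|· - p|²)` the Laplacian
is nonnegative, where the Laplacian of the radial term at `x`, with `q = |x - p|²`, is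
`2 n g'(q) + 4 q g''(q)`. -/
lemma lap_add_radial_nonneg {n : ℕ} {f : EuclideanSpace ℝ (Fin n) → ℝ} (hf : ContDiff ℝ 2 f)
    {g g1 : ℝ → ℝ} {g2 : ℝ} {x p : EuclideanSpace ℝ (Fin n)}
    (hg : ∀ᶠ s in 𝓝 (‖x - p‖ ^ 2), HasDerivAt g (g1 s) s)
    (hg1 : HasDerivAt g1 g2 (‖x - p‖ ^ 2))
    (hmin : IsLocalMin (fun y => f y + g (‖y - p‖ ^ 2)) x) :
    0 ≤ lap n f x + (2 * n * g1 (‖x - p‖ ^ 2) + 4 * ‖x - p‖ ^ 2 * g2) := by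
  set q : ℝ := ‖x - p‖ ^ 2 with hq
  have key : ∀ i : Fin n, 0 ≤
      fderiv ℝ (fun y => fderiv ℝ f y (EuclideanSpace.single i 1)) x (EuclideanSpace.single i 1)
        + (2 * g1 q + 4 * ((x - p) i) ^ 2 * g2) := by
    intro i
    set e : EuclideanSpace ℝ (Fin n) := EuclideanSpace.single i 1 with he
    -- Restriction to the line through `x` in direction `e`: there `|y - p|²` is this quadratic.
    let Q : ℝ → ℝ := fun t => q + 2 * (x - p) i * t + t ^ 2
    have hQ : ∀ t : ℝ, ‖x + t • e - p‖ ^ 2 = Q t := by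
      intro t
      have h1 : x + t • e - p = (x - p) + t • e := by abel
      rw [h1, norm_add_sq_real, norm_smul, inner_smul_right, he,
        EuclideanSpace.inner_single_right, PiLp.norm_single]
      simp only [Q, hq]
      simp
      ring
    have hQ0 : Q 0 = q := by simp [Q]
    have hQd : ∀ t, HasDerivAt Q (2 * (x - p) i + 2 * t) t := by
      intro t
      have := (((hasDerivAt_id t).const_mul (2 * (x - p) i)).const_add q).add
        ((hasDerivAt_id t).pow 2)
      refine this.congr_deriv ?_
      simp
    have hline : ∀ t, HasDerivAt (fun s : ℝ => f (x + s • e)) (fderiv ℝ f (x + t • e) e) t :=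
      fun t => hasDerivAt_line (hf.differentiable (by norm_num) _)
    have hline2 : HasDerivAt (fun s : ℝ => fderiv ℝ f (x + s • e) e)
        (fderiv ℝ (fun y => fderiv ℝ f y e) x e) 0 := by
      have := hasDerivAt_line (f := fun y => fderiv ℝ f y e) (x := x) (e := e) (t := 0)
        (differentiable_fderiv_apply hf e _)
      simpa using this
    have hQt : Tendsto Q (𝓝 0) (𝓝 q) := by
      have := (hQd 0).continuousAt.tendsto
      rwa [hQ0] at this
    have hA : ∀ᶠ s in 𝓝 (0 : ℝ), HasDerivAt (fun s : ℝ => f (x + s • e) + g (Q s))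
        (fderiv ℝ f (x + s • e) e + g1 (Q s) * (2 * (x - p) i + 2 * s)) s := by
      filter_upwards [hQt.eventually hg] with s hs
      exact (hline s).add (hs.comp s (hQd s))
    have hB : HasDerivAt
        (fun s : ℝ => fderiv ℝ f (x + s • e) e + g1 (Q s) * (2 * (x - p) i + 2 * s))
        (fderiv ℝ (fun y => fderiv ℝ f y e) x e + (2 * g1 q + 4 * ((x - p) i) ^ 2 * g2)) 0 := by
      have h1 : HasDerivAt (fun s => g1 (Q s)) (g2 * (2 * (x - p) i + 2 * 0)) 0 := by
        refine HasDerivAt.comp (h₂ := g1) (h := Q) 0 ?_ (hQd 0)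
        rw [hQ0]; exact hg1
      have h2 : HasDerivAt (fun s : ℝ => 2 * (x - p) i + 2 * s) 2 0 := by
        simpa using ((hasDerivAt_id (0 : ℝ)).const_mul 2).const_add (2 * (x - p) i)
      refine (hline2.add (h1.mul h2)).congr_deriv ?_
      rw [hQ0]; ring
    refine second_deriv_nonneg_of_isLocalMin hA hB ?_
    have hc : Tendsto (fun s : ℝ => x + s • e) (𝓝 0) (𝓝 x) := by
      have : Continuous (fun s : ℝ => x + s • e) := by fun_prop
      simpa using this.tendsto 0
    have := hc.eventually hmin
    filter_upwards [this] with s hs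
    rw [hQ s] at hs
    simpa [hQ0] using hs
  have hsum := Finset.sum_nonneg fun i (_ : i ∈ Finset.univ) => key i
  have hqs : q = ∑ i, ((x - p) i) ^ 2 := by rw [hq, EuclideanSpace.real_norm_sq_eq]
  have : lap n f x + (2 * n * g1 q + 4 * q * g2) = ∑ i : Fin n,
      (fderiv ℝ (fun y => fderiv ℝ f y (EuclideanSpace.single i 1)) x (EuclideanSpace.single i 1)
        + (2 * g1 q + 4 * ((x - p) i) ^ 2 * g2)) := by
    rw [Finset.sum_add_distrib, Finset.sum_add_distrib, ← Finset.sum_mul _ _ g2, ← Finset.mul_sum,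
      ← Finset.mul_sum, ← hqs]
    simp [lap]
    ring
  rw [this]
  exact hsum

/-! ### The a priori bound on the modulus -/

lemma lap_neg_sq_add_sq_le {n : ℕ} {u v : EuclideanSpace ℝ (Fin n) → ℝ}
    (hu : ContDiff ℝ 2 u) (hv : ContDiff ℝ 2 v) (x : EuclideanSpace ℝ (Fin n)) :
    lap n (fun y => -(u y ^ 2 + v y ^ 2)) x ≤ -(2 * u x * lap n u x + 2 * v x * lap n v x) := by
  have hud := hu.differentiable (by norm_num)
  have hvd := hv.differentiable (by norm_num)
  simp only [lap]
  rw [Finset.mul_sum, Finset.mul_sum, ← Finset.sum_add_distrib, ← Finset.sum_neg_distrib]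
  refine Finset.sum_le_sum fun i _ => ?_
  set e : EuclideanSpace ℝ (Fin n) := EuclideanSpace.single i 1
  have h1 : (fun y => fderiv ℝ (fun y => -(u y ^ 2 + v y ^ 2)) y e) =
      fun y => -(2 * (u y * fderiv ℝ u y e) + 2 * (v y * fderiv ℝ v y e)) := by
    funext y
    have := (((hud y).hasFDerivAt.pow 2).add ((hvd y).hasFDerivAt.pow 2)).neg
    have h := this.fderiv
    have h' : fderiv ℝ (fun y => -(u y ^ 2 + v y ^ 2)) y = _ := h
    rw [h']
    simp
    ring
  have hu2 := (differentiable_fderiv_apply hu e x).hasFDerivAt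
  have hv2 := (differentiable_fderiv_apply hv e x).hasFDerivAt
  have h2 := ((((hud x).hasFDerivAt.mul hu2).const_mul 2).add
    (((hvd x).hasFDerivAt.mul hv2).const_mul 2)).neg
  have h3 : fderiv ℝ (fun y => -(2 * (u y * fderiv ℝ u y e) + 2 * (v y * fderiv ℝ v y e))) x = _ :=
    h2.fderiv
  rw [h1, h3]
  simp
  nlinarith [sq_nonneg (fderiv ℝ u x e), sq_nonneg (fderiv ℝ v x e)]

/-- Keller–Osserman bound, in dimension `n ≤ 2`, without any growth assumption. On the
ball of radius `R` around `p` the barrier is `1 + b / (R² - |x - p|²)²`, with `b` the maximum of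
`(u² + v² - 1)(R² - |x - p|²)²`; the equation forces `b ≤ 12 R²`. -/
lemma sq_add_sq_le_one {n : ℕ} (hn : n ≤ 2) {u v : EuclideanSpace ℝ (Fin n) → ℝ}
    (hsol : IsSolution n 1 u v) (p : EuclideanSpace ℝ (Fin n)) :
    u p ^ 2 + v p ^ 2 ≤ 1 := by
  obtain ⟨hu, hv, heu, hev⟩ := hsol
  have hn' : (n : ℝ) ≤ 2 := by exact_mod_cast hn
  have main : ∀ R : ℝ, 0 < R → (u p ^ 2 + v p ^ 2 - 1) * R ^ 2 ≤ 12 := by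
    intro R hR
    by_contra! hcon
    let G : EuclideanSpace ℝ (Fin n) → ℝ :=
      fun x => (u x ^ 2 + v x ^ 2 - 1) * (R ^ 2 - ‖x - p‖ ^ 2) ^ 2
    have huc := hu.continuous
    have hvc := hv.continuous
    have hGc : Continuous G := by fun_prop
    obtain ⟨x, hxB, hx⟩ := (isCompact_closedBall p R).exists_isMaxOn
      ⟨p, Metric.mem_closedBall_self hR.le⟩ hGc.continuousOn
    have hb : 12 * R ^ 2 < G x := by
      have h1 : G p ≤ G x := hx (Metric.mem_closedBall_self hR.le)
      have h2 : G p = (u p ^ 2 + v p ^ 2 - 1) * R ^ 2 * R ^ 2 := by simp [G]; ring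
      have : 0 < R ^ 2 := by positivity
      nlinarith
    set b := G x with hbdef
    have hbpos : 0 < b := lt_trans (by positivity) hb
    have hxle : ‖x - p‖ ≤ R := by simpa [dist_eq_norm] using hxB
    have hxlt : ‖x - p‖ < R := by
      refine lt_of_le_of_ne hxle fun h => ?_
      have : b = 0 := by simp [hbdef, G, h]
      linarith
    set q : ℝ := ‖x - p‖ ^ 2 with hq
    have hq0 : 0 ≤ q := by positivity
    have hqR : q < R ^ 2 := by
      rw [hq]; exact pow_lt_pow_left₀ hxlt (norm_nonneg _) (by norm_num)
    have hd : ∀ s : ℝ, s < R ^ 2 → HasDerivAt (fun s => b * ((R ^ 2 - s) ^ 2)⁻¹)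
        (2 * b * ((R ^ 2 - s) ^ 3)⁻¹) s := by
      intro s hs
      have hne : R ^ 2 - s ≠ 0 := by linarith
      have := (((((hasDerivAt_id s).const_sub (R ^ 2)).pow 2).inv
        (by simpa using hne))).const_mul b
      refine this.congr_deriv ?_
      simp
      field_simp
    have hd2 : HasDerivAt (fun s => 2 * b * ((R ^ 2 - s) ^ 3)⁻¹)
        (6 * b * ((R ^ 2 - q) ^ 4)⁻¹) q := by
      have hne : R ^ 2 - q ≠ 0 := by linarith
      have := (((((hasDerivAt_id q).const_sub (R ^ 2)).pow 3).inv
        (by simpa using hne))).const_mul (2 * b)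
      refine this.congr_deriv ?_
      simp
      field_simp
      ring
    have hfC : ContDiff ℝ 2 (fun y => -(u y ^ 2 + v y ^ 2)) := ((hu.pow 2).add (hv.pow 2)).neg
    have hD : 0 < R ^ 2 - q := by linarith
    have hbeq : u x ^ 2 + v x ^ 2 - 1 = b * ((R ^ 2 - q) ^ 2)⁻¹ := by
      rw [hbdef]; simp only [G, ← hq]; field_simp
    have hmin : IsLocalMin (fun y => -(u y ^ 2 + v y ^ 2) +
        (fun s => b * ((R ^ 2 - s) ^ 2)⁻¹) (‖y - p‖ ^ 2)) x := by
      have hopen : Metric.ball p R ∈ 𝓝 x :=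
        Metric.isOpen_ball.mem_nhds (by simpa [dist_eq_norm] using hxlt)
      filter_upwards [hopen] with y hy
      have hyR : ‖y - p‖ < R := by simpa [dist_eq_norm] using hy
      have hyq : ‖y - p‖ ^ 2 < R ^ 2 := pow_lt_pow_left₀ hyR (norm_nonneg _) (by norm_num)
      have hGy : G y ≤ b := hx (Metric.ball_subset_closedBall hy)
      have hDy : 0 < (R ^ 2 - ‖y - p‖ ^ 2) ^ 2 := by
        have : 0 < R ^ 2 - ‖y - p‖ ^ 2 := by linarith
        positivity
      have h3 : u y ^ 2 + v y ^ 2 - 1 ≤ b * ((R ^ 2 - ‖y - p‖ ^ 2) ^ 2)⁻¹ := by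
        rw [← div_eq_mul_inv, le_div_iff₀ hDy]; exact hGy
      have hbeq' := hbeq
      rw [hq] at hbeq'
      linarith
    have hL := lap_add_radial_nonneg hfC
      ((isOpen_Iio.mem_nhds hqR : Set.Iio (R ^ 2) ∈ 𝓝 q) |> fun h =>
        Filter.mem_of_superset h fun s hs => hd s hs) hd2 hmin
    have hle := lap_neg_sq_add_sq_le hu hv x
    set ρ := u x ^ 2 + v x ^ 2 with hρ
    have hlap : 2 * u x * lap n u x + 2 * v x * lap n v x = 2 * ρ * (ρ - 1) := by
      have e1 := heu x
      have e2 := hev x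
      have e1' : lap n u x = -(u x - (u x) ^ 3 - 1 * u x * (v x) ^ 2) := by linarith
      have e2' : lap n v x = -(v x - (v x) ^ 3 - 1 * (u x) ^ 2 * v x) := by linarith
      rw [e1', e2', hρ]; ring
    rw [hlap] at hle
    rw [← hq] at hL
    have hw : 2 * ρ * (ρ - 1) ≥ 2 * (ρ - 1) ^ 2 := by
      have : 0 < ρ - 1 := by rw [hbeq]; positivity
      nlinarith
    rw [hbeq] at hw
    have hfin : 2 * (b * ((R ^ 2 - q) ^ 2)⁻¹) ^ 2 ≤
        2 * n * (2 * b * ((R ^ 2 - q) ^ 3)⁻¹) + 4 * q * (6 * b * ((R ^ 2 - q) ^ 4)⁻¹) := by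
      rw [hbeq] at hle
      linarith
    -- Factoring out `b (R² - q)⁻⁴` leaves a bracket that is negative because `12 R² < b`.
    have h5 : 2 * n * (2 * b * ((R ^ 2 - q) ^ 3)⁻¹) + 4 * q * (6 * b * ((R ^ 2 - q) ^ 4)⁻¹)
        - 2 * (b * ((R ^ 2 - q) ^ 2)⁻¹) ^ 2
        = b * (4 * n * (R ^ 2 - q) + 24 * q - 2 * b) * ((R ^ 2 - q) ^ 4)⁻¹ := by
      field_simp
      ring
    have h6 : 4 * n * (R ^ 2 - q) + 24 * q - 2 * b < 0 := by
      linarith [mul_le_mul_of_nonneg_right hn' hD.le]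
    have h7 : b * (4 * n * (R ^ 2 - q) + 24 * q - 2 * b) * ((R ^ 2 - q) ^ 4)⁻¹ < 0 :=
      mul_neg_of_neg_of_pos (mul_neg_of_pos_of_neg hbpos h6) (by positivity)
    linarith
  by_contra! hcon
  set d := u p ^ 2 + v p ^ 2 - 1 with hd
  have hdpos : 0 < d := by linarith
  have h := main (1 + 13 / d) (by positivity)
  have h1 : d * (1 + 13 / d) ^ 2 = d + 26 + 169 / d := by field_simp; ring
  have h2 : 0 < 169 / d := by positivity
  linarith

/-! ### Positive superharmonic functions in low dimension -/

/-- In dimension at most two a positive superharmonic function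
is nowhere smaller than its value at `p`. On the exterior of a small ball around `p` it is compared
with small multiples of `log q - 1 / q`, `q = |x - p|²`, which is strictly superharmonic and tends
to infinity. -/
lemma le_of_superharmonic {n : ℕ} (hn : n ≤ 2) {u : EuclideanSpace ℝ (Fin n) → ℝ}
    (hu : ContDiff ℝ 2 u) (hpos : ∀ x, 0 < u x) (hsup : ∀ x, lap n u x ≤ 0)
    (p z : EuclideanSpace ℝ (Fin n)) : u p ≤ u z := by
  have hn' : (n : ℝ) ≤ 2 := by exact_mod_cast hn
  refine le_of_forall_lt_imp_le_of_dense fun c hc => ?_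
  by_cases hzp : z = p
  · rw [hzp]; exact hc.le
  have hc1 : ∀ᶠ y in 𝓝 p, c < u y := hu.continuous.continuousAt.eventually (lt_mem_nhds hc)
  obtain ⟨δ₀, hδ₀, hball⟩ := Metric.eventually_nhds_iff.1 hc1
  have hzpos : 0 < ‖z - p‖ := norm_pos_iff.2 (sub_ne_zero.2 hzp)
  obtain ⟨δ, hδ, hδlt⟩ := exists_between (lt_min hδ₀ hzpos)
  have hδ1 : δ < δ₀ := lt_of_lt_of_le hδlt (min_le_left _ _)
  have hδ2 : δ < ‖z - p‖ := lt_of_lt_of_le hδlt (min_le_right _ _)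
  let g : ℝ → ℝ := fun s => Real.log s - s⁻¹
  have hgtop : Tendsto g atTop atTop := by
    have := Real.tendsto_log_atTop.atTop_add (tendsto_inv_atTop_zero (𝕜 := ℝ)).neg
    simpa [g, sub_eq_add_neg] using this
  have main : ∀ ε : ℝ, 0 < ε → c ≤ u z + ε * (g (‖z - p‖ ^ 2) - g (δ ^ 2)) := by
    intro ε hε
    by_contra! hcon
    have hsq : Tendsto (fun r : ℝ => ε * (g (r ^ 2) - g (δ ^ 2))) atTop atTop := by
      refine Tendsto.const_mul_atTop hε ?_
      exact tendsto_atTop_add_const_right _ _ (hgtop.comp (tendsto_pow_atTop (by norm_num)))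
    obtain ⟨R, hR1, hR2⟩ := ((hsq.eventually_ge_atTop c).and
      (eventually_gt_atTop ‖z - p‖)).exists
    let F : EuclideanSpace ℝ (Fin n) → ℝ := fun y => u y + ε * (g (‖y - p‖ ^ 2) - g (δ ^ 2))
    let K : Set (EuclideanSpace ℝ (Fin n)) := Metric.closedBall p R ∩ {y | δ ≤ ‖y - p‖}
    have hK : IsCompact K := (isCompact_closedBall p R).inter_right
      (isClosed_le continuous_const (by fun_prop))
    have huc := hu.continuous
    have hFc : ContinuousOn F K := by
      have hne : ∀ y ∈ K, ‖y - p‖ ^ 2 ≠ 0 := fun y hy => by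
        have : 0 < ‖y - p‖ := lt_of_lt_of_le hδ hy.2
        positivity
      have hN : ContinuousOn (fun y => ‖y - p‖ ^ 2) K := by fun_prop
      exact huc.continuousOn.add (continuousOn_const.mul
        (((hN.log hne).sub (hN.inv₀ hne)).sub continuousOn_const))
    have hzK : z ∈ K := ⟨by simpa [dist_eq_norm] using hR2.le, hδ2.le⟩
    obtain ⟨x, hxK, hx⟩ := hK.exists_isMinOn ⟨z, hzK⟩ hFc
    have hFx : F x < c := lt_of_le_of_lt (hx hzK) hcon
    have hxδ : δ < ‖x - p‖ := by
      refine lt_of_le_of_ne hxK.2 fun h => ?_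
      have h1 : c < u x := hball (by rw [dist_eq_norm, ← h]; exact hδ1)
      have h2 : F x = u x := by simp [F, ← h]
      linarith
    have hxR : ‖x - p‖ < R := by
      refine lt_of_le_of_ne (by simpa [dist_eq_norm] using hxK.1) fun h => ?_
      have h2 : F x = u x + ε * (g (R ^ 2) - g (δ ^ 2)) := by simp [F, h]
      have := hpos x
      linarith
    have hmin : IsLocalMin (fun y => u y + (fun s => ε * (g s - g (δ ^ 2))) (‖y - p‖ ^ 2)) x := by
      have h1 : ∀ᶠ y in 𝓝 x, δ < ‖y - p‖ :=
        (by fun_prop : Continuous fun y => ‖y - p‖).continuousAt.eventually (lt_mem_nhds hxδ)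
      have h2 : ∀ᶠ y in 𝓝 x, ‖y - p‖ < R :=
        (by fun_prop : Continuous fun y => ‖y - p‖).continuousAt.eventually (gt_mem_nhds hxR)
      filter_upwards [h1, h2] with y hy1 hy2
      exact hx ⟨by simpa [dist_eq_norm] using hy2.le, hy1.le⟩
    set q : ℝ := ‖x - p‖ ^ 2 with hq
    have hqpos : 0 < q := by
      have : 0 < ‖x - p‖ := hδ.trans hxδ
      positivity
    have hd : ∀ s : ℝ, 0 < s → HasDerivAt (fun s => ε * (g s - g (δ ^ 2)))
        (ε * (s⁻¹ + (s ^ 2)⁻¹)) s := by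
      intro s hs
      have := (((Real.hasDerivAt_log hs.ne').sub (hasDerivAt_inv hs.ne')).sub_const
        (g (δ ^ 2))).const_mul ε
      exact this.congr_deriv (by ring)
    have hd2 : HasDerivAt (fun s => ε * (s⁻¹ + (s ^ 2)⁻¹))
        (ε * (-(q ^ 2)⁻¹ - 2 * (q ^ 3)⁻¹)) q := by
      have := ((hasDerivAt_inv hqpos.ne').add
        (((hasDerivAt_id q).pow 2).inv (by simpa using hqpos.ne'))).const_mul ε
      refine this.congr_deriv ?_
      simp only [id, Pi.pow_apply, Nat.cast_ofNat]
      field_simp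
      ring
    have hL := lap_add_radial_nonneg hu
      (Filter.mem_of_superset (isOpen_Ioi.mem_nhds hqpos : Set.Ioi (0 : ℝ) ∈ 𝓝 q)
        fun s hs => hd s hs) hd2 hmin
    rw [← hq] at hL
    have h5 : 2 * n * (ε * (q⁻¹ + (q ^ 2)⁻¹)) + 4 * q * (ε * (-(q ^ 2)⁻¹ - 2 * (q ^ 3)⁻¹))
        = ε * ((2 * n - 4) * q + (2 * n - 8)) * (q ^ 2)⁻¹ := by
      field_simp
      ring
    have h6 : (2 * n - 4) * q + (2 * n - 8) < 0 := by
      linarith [mul_le_mul_of_nonneg_right hn' hqpos.le]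
    have h7 : ε * ((2 * n - 4) * q + (2 * n - 8)) * (q ^ 2)⁻¹ < 0 :=
      mul_neg_of_neg_of_pos (mul_neg_of_pos_of_neg hε h6) (by positivity)
    have := hsup x
    linarith
  set A := g (‖z - p‖ ^ 2) - g (δ ^ 2) with hA
  have hlim : Tendsto (fun ε : ℝ => u z + ε * A) (𝓝[>] 0) (𝓝 (u z)) := by
    have : Continuous (fun ε : ℝ => u z + ε * A) := by fun_prop
    have h := this.tendsto 0
    simp only [zero_mul, add_zero] at h
    exact h.mono_left nhdsWithin_le_nhds
  exact ge_of_tendsto hlim (eventually_nhdsWithin_of_forall fun ε hε => main ε hε)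

/-- Theorem 1.7: Liouville theorem for `Λ = 1` in dimension `≤ 2`:
positive solutions are constant, with `u² + v² = 1`. -/
theorem stmt_7 (N : ℕ) (hN : N + 1 ≤ 2)
    (u v : EuclideanSpace ℝ (Fin (N + 1)) → ℝ)
    (hsol : IsSolution (N + 1) 1 u v)
    (hu : ∀ x, 0 < u x) (hv : ∀ x, 0 < v x) :
    (∀ x y : EuclideanSpace ℝ (Fin (N + 1)), u x = u y ∧ v x = v y) ∧
    (∀ x, (u x) ^ 2 + (v x) ^ 2 = 1) := by
  have h1 := sq_add_sq_le_one hN hsol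
  obtain ⟨huC, hvC, heu, hev⟩ := hsol
  have hlu : ∀ x, lap (N + 1) u x = -(u x * (1 - (u x ^ 2 + v x ^ 2))) := fun x => by
    linarith [heu x]
  have hlv : ∀ x, lap (N + 1) v x = -(v x * (1 - (u x ^ 2 + v x ^ 2))) := fun x => by
    linarith [hev x]
  have hsu : ∀ x, lap (N + 1) u x ≤ 0 := fun x => by
    rw [hlu]; nlinarith [mul_nonneg (hu x).le (sub_nonneg.2 (h1 x))]
  have hsv : ∀ x, lap (N + 1) v x ≤ 0 := fun x => by
    rw [hlv]; nlinarith [mul_nonneg (hv x).le (sub_nonneg.2 (h1 x))]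
  have hcu : ∀ x y, u x = u y := fun x y =>
    le_antisymm (le_of_superharmonic hN huC hu hsu x y) (le_of_superharmonic hN huC hu hsu y x)
  have hcv : ∀ x y, v x = v y := fun x y =>
    le_antisymm (le_of_superharmonic hN hvC hv hsv x y) (le_of_superharmonic hN hvC hv hsv y x)
  refine ⟨fun x y => ⟨hcu x y, hcv x y⟩, fun x => ?_⟩
  have hconst : u = fun _ => u x := funext fun y => hcu y x
  have h0 : lap (N + 1) u x = 0 := by
    rw [hconst]; simp [lap]
  have h2 := hlu x
  rw [h0] at h2
  have h3 : 1 - (u x ^ 2 + v x ^ 2) = 0 := by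
    have : u x * (1 - (u x ^ 2 + v x ^ 2)) = 0 := by linarith
    exact (mul_eq_zero.1 this).resolve_left (hu x).ne'
  linarith
end
end
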